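/- arXiv:1503.08270 — 2 statements merged into one kernel-verified Lean document; each statement's English description precedes it below -/
import Mathlib

section
/- The number of latin squares of order d satisfies L(d) ≥ d!^{2d} / d^{d^2}. -/
/-!
Every 0/1 matrix of order `d` with all row and column sums equal to `k` has permanent at least
`k ^ d * d! / d ^ d`, by the van der Waerden bound on the permanents of doubly stochastic matrices.
A latin rectangle with `r` rows extends by a row in as many ways as the permanent of its
availability matrix, whose row and column sums are `d - r`; multiplying over `r` gives the bound.

The van der Waerden bound is proved by Gurvits' method: the permanent of `A` is the mixed derivative
of `∏ Xᵢ` along the columns of `A`. Stability (no zeros with all coordinates in the upper half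
plane) is preserved by derivatives in positive directions and makes the restrictions to positive
lines real-rooted, so each derivative costs at most a factor `(n / (n + 1)) ^ n` of a lower bound of
the form `c * ∏ xⱼ`.
-/

/-- `T` is a latin square of order `d`: every row and every column is a permutation. -/
def IsLatinSquare {d : ℕ} (T : Fin d → Fin d → Fin d) : Prop :=
  (∀ i, Function.Injective (T i)) ∧ ∀ j, Function.Injective (fun i => T i j)

/-- The number of latin squares of order `d`. -/
noncomputable def numLatinSquares (d : ℕ) : ℕ :=
  {T : Fin d → Fin d → Fin d | IsLatinSquare T}.ncard

theorem multiset_prod_le_sum_div_card_pow {s : Multiset ℝ} (hs : ∀ x ∈ s, 0 ≤ x) :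
    s.prod ≤ (s.sum / s.card) ^ s.card := by
  rcases eq_or_ne s 0 with rfl | hne
  · simp
  have hcard : s.card ≠ 0 := Multiset.card_eq_zero.not.mpr hne
  have hnonneg : ∀ x : s, 0 ≤ (x : ℝ) := fun x ↦ hs x Multiset.coe_mem
  have amgm := Real.geom_mean_le_arith_mean Finset.univ (fun _ : s ↦ 1) (fun x ↦ (x : ℝ))
    (by simp) (by simpa using Nat.pos_of_ne_zero hcard) fun x _ ↦ hnonneg x
  simp only [Real.rpow_one, ← Multiset.prod_eq_prod_coe, one_mul, ← Multiset.sum_eq_sum_coe,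
    Finset.sum_const, Finset.card_univ, Multiset.card_coe, nsmul_eq_mul, mul_one] at amgm
  have hprod : 0 ≤ s.prod := Multiset.prod_nonneg hs
  calc s.prod = (s.prod ^ (s.card : ℝ)⁻¹) ^ s.card := (Real.rpow_inv_natCast_pow hprod hcard).symm
    _ ≤ (s.sum / s.card) ^ s.card := by gcongr

section NegativeRoots

open Polynomial

theorem eval_eq_eval_zero_mul_prod_roots {K : Type*} [Field K] {p : K[X]} (hp : p.Splits)
    (h0 : p.eval 0 ≠ 0) (t : K) :
    p.eval t = p.eval 0 * (p.roots.map fun r ↦ 1 + t * (1 / (0 - r))).prod := by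
  rw [hp.eval_eq_prod_roots, hp.eval_eq_prod_roots, mul_assoc, ← Multiset.prod_map_mul]
  congr 2
  refine Multiset.map_congr rfl fun r hr ↦ ?_
  have hr0 : 0 - r ≠ 0 := by
    intro h
    rw [zero_sub, neg_eq_zero] at h
    exact h0 (h ▸ (isRoot_of_mem_roots hr).eq_zero)
  field_simp
  ring

variable {p : ℝ[X]}

theorem eval_zero_derivative_pos (hp : p.Splits) (hdeg : p.natDegree ≠ 0)
    (hroots : ∀ r ∈ p.roots, r < 0) (h0 : 0 < p.eval 0) : 0 < p.derivative.eval 0 := by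
  rw [hp.eval_derivative_eq_eval_mul_sum h0.ne']
  refine mul_pos h0 ?_
  calc 0 = (p.roots.map fun _ ↦ (0 : ℝ)).sum := by simp
    _ < (p.roots.map fun r ↦ 1 / (0 - r)).sum :=
      Multiset.sum_lt_sum_of_nonempty (hp.roots_ne_zero hdeg) fun r hr ↦
        one_div_pos.mpr (sub_pos.mpr (hroots r hr))

theorem eval_le_eval_zero_mul_pow (hp : p.Splits) (hroots : ∀ r ∈ p.roots, r < 0)
    (h0 : 0 < p.eval 0) {t : ℝ} (ht : 0 ≤ t) :
    p.eval t ≤ p.eval 0 *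
      (1 + t * (p.derivative.eval 0 / p.eval 0) / p.natDegree) ^ p.natDegree := by
  rw [hp.eval_derivative_div_eval_of_ne_zero h0.ne', eval_eq_eval_zero_mul_prod_roots hp h0.ne' t]
  gcongr
  have hcard : p.roots.card = p.natDegree := hp.natDegree_eq_card_roots.symm
  rcases eq_or_ne p.natDegree 0 with hdeg | hdeg
  · have : p.roots = 0 := by rwa [← Multiset.card_eq_zero, hcard]
    simp [this, hdeg]
  have hfactor : ∀ x ∈ p.roots.map (fun r ↦ 1 + t * (1 / (0 - r))), 0 ≤ x := by
    simp only [Multiset.mem_map, forall_exists_index, and_imp, forall_apply_eq_imp_iff₂]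
    intro r hr
    have : 0 < 0 - r := sub_pos.mpr (hroots r hr)
    positivity
  refine (multiset_prod_le_sum_div_card_pow hfactor).trans_eq ?_
  rw [Multiset.card_map, hcard, Multiset.sum_map_add, Multiset.sum_map_mul_left,
    Multiset.map_const', Multiset.sum_replicate, hcard, nsmul_one, add_div,
    div_self (Nat.cast_ne_zero.mpr hdeg)]

theorem mul_le_eval_zero_derivative (hp : p.Splits) (hroots : ∀ r ∈ p.roots, r < 0)
    (h0 : 0 < p.eval 0) {n : ℕ} (hn : n ≠ 0) (hdeg : p.natDegree = n + 1) {b : ℝ}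
    (hb : ∀ t, 0 < t → b * t ≤ p.eval t) :
    (n / (n + 1) : ℝ) ^ n * b ≤ p.derivative.eval 0 := by
  set q := p.derivative.eval 0
  have hq : 0 < q := eval_zero_derivative_pos hp (by lia) hroots h0
  have hn' : (0 : ℝ) < n := by positivity
  -- the minimizer of `(1 + t * (q / p.eval 0) / (n + 1)) ^ (n + 1) / t`
  set t := (n + 1) * p.eval 0 / (n * q) with ht
  have ht0 : 0 < t := by positivity
  have hmean : 1 + t * (q / p.eval 0) / (n + 1) = (n + 1) / n := by
    rw [ht]
    field_simp
  have key : b * t ≤ q * ((n + 1) / n) ^ n * t :=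
    calc b * t ≤ p.eval t := hb t ht0
      _ ≤ p.eval 0 * (1 + t * (q / p.eval 0) / (n + 1)) ^ (n + 1) := by
        simpa [hdeg] using eval_le_eval_zero_mul_pow hp hroots h0 ht0.le
      _ = q * ((n + 1) / n) ^ n * t := by
        rw [hmean, ht, pow_succ]
        field_simp
  calc (n / (n + 1) : ℝ) ^ n * b ≤ (n / (n + 1)) ^ n * (q * ((n + 1) / n) ^ n) := by
        gcongr
        exact le_of_mul_le_mul_right key ht0
    _ = q := by
        rw [mul_left_comm, ← mul_pow, div_mul_div_cancel₀ (by positivity),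
          div_self hn'.ne', one_pow, mul_one]

end NegativeRoots

section DirectionalDerivative

open scoped Polynomial

variable {ι R K : Type*} [CommSemiring R] [CommSemiring K] [Algebra R K]

/-- The directional derivative `∑ i, a i * ∂/∂Xᵢ` of multivariate polynomials, encoded as the
derivation with constant values `a i` on the variables so that `ι` may be infinite. -/
noncomputable def dirDeriv (a : ι → R) :
    Derivation R (MvPolynomial ι R) (MvPolynomial ι R) :=
  MvPolynomial.mkDerivation R fun i ↦ MvPolynomial.C (a i)

/-- The restriction `t ↦ G (z + t a)` of `G` to the line through `z` with direction `a`, as a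
univariate polynomial; the base point may have coordinates in an `R`-algebra, so that real
polynomials can be restricted to complex lines in real directions. -/
noncomputable def alongLine (z : ι → K) (a : ι → R) (G : MvPolynomial ι R) : K[X] :=
  MvPolynomial.aeval
    (fun i ↦ Polynomial.C (z i) + Polynomial.C (algebraMap R K (a i)) * Polynomial.X) G

theorem aeval_alongLine {S : Type*} [CommSemiring S] [Algebra R S] [Algebra K S]
    [IsScalarTower R K S] (z : ι → K) (a : ι → R) (G : MvPolynomial ι R) (t : S) :
    Polynomial.aeval t (alongLine z a G) =
      MvPolynomial.aeval (fun i ↦ algebraMap K S (z i) + algebraMap R S (a i) * t) G := by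
  rw [alongLine, ← AlgHom.restrictScalars_apply R, ← AlgHom.comp_apply, MvPolynomial.comp_aeval]
  congr 2
  ext i
  simp [← IsScalarTower.algebraMap_apply]

theorem eval_alongLine (v a : ι → R) (G : MvPolynomial ι R) (t : R) :
    (alongLine v a G).eval t = MvPolynomial.eval (v + t • a) G := by
  rw [← Polynomial.coe_aeval_eq_eval, aeval_alongLine, MvPolynomial.aeval_eq_eval]
  congr 2
  ext i
  simp [mul_comm]

theorem derivative_alongLine (z : ι → K) (a : ι → R) (G : MvPolynomial ι R) :
    (alongLine z a G).derivative = alongLine z a (dirDeriv a G) := by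
  simp only [alongLine, dirDeriv]
  induction G using MvPolynomial.induction_on with
  | C r => simp [Polynomial.algebraMap_apply]
  | add p q hp hq => simp [hp, hq]
  | mul_X p i hp =>
    simp only [map_mul, Polynomial.derivative_mul, hp, Derivation.leibniz,
      MvPolynomial.mkDerivation_X, MvPolynomial.aeval_X]
    simp only [Polynomial.derivative_C, Polynomial.derivative_mul,
      Polynomial.derivative_X, MvPolynomial.algHom_C, Polynomial.algebraMap_apply,
      MvPolynomial.aeval_X, smul_eq_mul, map_add, map_mul]
    ring

theorem isHomogeneous_dirDeriv (a : ι → R) {G : MvPolynomial ι R} {n : ℕ}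
    (hG : G.IsHomogeneous (n + 1)) : (dirDeriv a G).IsHomogeneous n := by
  have hmonomial : ∀ d ∈ G.support, dirDeriv a (MvPolynomial.monomial d (G.coeff d)) ∈
      MvPolynomial.homogeneousSubmodule ι R n := by
    intro d hd
    rw [dirDeriv, MvPolynomial.mkDerivation_monomial]
    refine Submodule.smul_mem _ _ (Submodule.sum_mem _ fun i hi ↦ ?_)
    have hdegree : (d - Finsupp.single i 1).degree = n := by
      have hle : Finsupp.single i 1 ≤ d :=
        Finsupp.single_le_iff.mpr (Nat.pos_of_ne_zero (Finsupp.mem_support_iff.mp hi))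
      have hsum := congrArg Finsupp.degree (tsub_add_cancel_of_le hle)
      rw [map_add, Finsupp.degree_single, Finsupp.degree_apply d,
        ← hG.degree_eq_sum_deg_support hd] at hsum
      exact Nat.add_right_cancel hsum
    exact (MvPolynomial.isHomogeneous_monomial _ hdegree).mul (MvPolynomial.isHomogeneous_C _ _)
  rw [G.as_sum, map_sum]
  exact Submodule.sum_mem _ hmonomial

theorem coeff_aeval_of_natDegree_le_one {f : ι → K[X]} (hf : ∀ i, (f i).natDegree ≤ 1)
    {G : MvPolynomial ι R} {n : ℕ} (hG : G.IsHomogeneous n) :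
    (MvPolynomial.aeval f G).coeff n = MvPolynomial.aeval (fun i ↦ (f i).coeff 1) G := by
  classical
  simp only [MvPolynomial.aeval_def, MvPolynomial.eval₂_eq, Polynomial.finsetSum_coeff]
  refine Finset.sum_congr rfl fun d hd ↦ ?_
  have hcard : d.toMultiset.card = n := by
    simp only [Finsupp.card_toMultiset, Finsupp.sum, id_eq, ← hG.degree_eq_sum_deg_support hd]
  have hprod := Polynomial.coeff_multiset_prod_of_natDegree_le (d.toMultiset.map f) 1
    (by simpa using fun i _ ↦ hf i)
  rw [Multiset.map_map, Finset.prod_multiset_map_count, Finset.prod_multiset_map_count,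
    Multiset.card_map, hcard, mul_one] at hprod
  simp only [Finsupp.toFinset_toMultiset, Finsupp.count_toMultiset, Function.comp_apply] at hprod
  rw [Polynomial.algebraMap_apply, Polynomial.coeff_C_mul, hprod]

theorem natDegree_alongLine_le (z : ι → K) (a : ι → R) {G : MvPolynomial ι R} {n : ℕ}
    (hG : G.IsHomogeneous n) : (alongLine z a G).natDegree ≤ n := by
  rw [alongLine, ← MvPolynomial.aeval_map_algebraMap K]
  simpa using MvPolynomial.aeval_natDegree_le _ (hG.map _).totalDegree_le _
    fun i ↦ (by compute_degree : _ ≤ 1)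

theorem coeff_alongLine (z : ι → K) (a : ι → R) {G : MvPolynomial ι R} {n : ℕ}
    (hG : G.IsHomogeneous n) :
    (alongLine z a G).coeff n = algebraMap R K (MvPolynomial.eval a G) := by
  rw [alongLine, coeff_aeval_of_natDegree_le_one (fun i ↦ by compute_degree) hG]
  simpa [MvPolynomial.aeval_eq_eval, Function.comp_def] using
    MvPolynomial.aeval_algebraMap_apply K a G

theorem eval_zero_dirDeriv (a : ι → R) {G : MvPolynomial ι R} (hG : G.IsHomogeneous 1) :
    MvPolynomial.eval 0 (dirDeriv a G) = MvPolynomial.eval a G := by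
  calc MvPolynomial.eval 0 (dirDeriv a G) = (alongLine 0 a G).derivative.eval 0 := by
        rw [derivative_alongLine, eval_alongLine, zero_smul, add_zero]
    _ = (alongLine 0 a G).coeff 1 := by
        rw [← Polynomial.coeff_zero_eq_eval_zero, Polynomial.coeff_derivative]
        simp
    _ = MvPolynomial.eval a G := coeff_alongLine 0 a hG

/-- The iterated directional derivative of multivariate polynomials along the directions `a j`. -/
noncomputable def iterDirDeriv :
    {n : ℕ} → (Fin n → ι → R) → MvPolynomial ι R →ₗ[R] MvPolynomial ι R
  | 0, _ => LinearMap.id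
  | _ + 1, a => iterDirDeriv (Fin.tail a) ∘ₗ (dirDeriv (a 0) : MvPolynomial ι R →ₗ[R] _)

end DirectionalDerivative

/-- A real polynomial that is stable, i.e. has no zero with all coordinates in the open upper half
plane, and is positive on the open positive orthant. -/
structure IsPositiveStable {ι : Type*} (G : MvPolynomial ι ℝ) : Prop where
  stable : ∀ z : ι → ℂ, (∀ i, 0 < (z i).im) → MvPolynomial.aeval z G ≠ 0
  pos : ∀ v : ι → ℝ, (∀ i, 0 < v i) → 0 < MvPolynomial.eval v G

theorem isPositiveStable_prod_X {ι : Type*} [Fintype ι] :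
    IsPositiveStable (∏ i : ι, MvPolynomial.X i) where
  stable z hz := by
    rw [map_prod, Finset.prod_ne_zero_iff]
    rintro i - h
    rw [MvPolynomial.aeval_X] at h
    exact (hz i).ne' (by rw [h, Complex.zero_im])
  pos v hv := by
    rw [map_prod]
    exact Finset.prod_pos fun i _ ↦ by simpa using hv i

namespace IsPositiveStable

variable {ι : Type*} {G : MvPolynomial ι ℝ} {n : ℕ} {a : ι → ℝ}

theorem natDegree_alongLine {K : Type*} [Field K] [Algebra ℝ K] (hG : IsPositiveStable G)
    (hn : G.IsHomogeneous n) (ha : ∀ i, 0 < a i) (z : ι → K) :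
    (alongLine z a G).natDegree = n := by
  refine Polynomial.natDegree_eq_of_le_of_coeff_ne_zero (natDegree_alongLine_le z a hn) ?_
  rw [coeff_alongLine z a hn]
  exact (map_ne_zero _).mpr (hG.pos a ha).ne'

theorem im_neg_of_aeval_alongLine_eq_zero (hG : IsPositiveStable G) (ha : ∀ i, 0 < a i)
    {z : ι → ℂ} (hz : ∀ i, 0 < (z i).im) {t : ℂ} (ht : (alongLine z a G).eval t = 0) :
    t.im < 0 := by
  by_contra! him
  rw [← Polynomial.coe_aeval_eq_eval, aeval_alongLine] at ht
  refine hG.stable _ (fun i ↦ ?_) ht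
  simpa using add_pos_of_pos_of_nonneg (hz i) (mul_nonneg (ha i).le him)

theorem splits_alongLine (hG : IsPositiveStable G) (ha : ∀ i, 0 < a i) (v : ι → ℝ) :
    (alongLine v a G).Splits := by
  -- a root in the upper half plane would contradict stability, and roots come in conjugate pairs
  have him_nonpos : ∀ t : ℂ, Polynomial.aeval t (alongLine v a G) = 0 → t.im ≤ 0 := by
    intro t ht
    by_contra! him
    rw [aeval_alongLine] at ht
    exact hG.stable _ (fun i ↦ by simpa using mul_pos (ha i) him) ht
  refine Polynomial.Splits.of_splits_map (algebraMap ℝ ℂ) (IsAlgClosed.splits _) fun t ht ↦ ?_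
  have hroot : Polynomial.aeval t (alongLine v a G) = 0 := by
    rw [← Polynomial.eval_map_algebraMap]
    exact (Polynomial.isRoot_of_mem_roots ht).eq_zero
  have hconj := him_nonpos (starRingEnd ℂ t) (by rw [Polynomial.aeval_conj, hroot, map_zero])
  rw [Complex.conj_im, neg_nonpos] at hconj
  exact ⟨t.re, Complex.ext rfl (by simpa using (him_nonpos t hroot).antisymm hconj |>.symm)⟩

theorem neg_of_mem_roots_alongLine (hG : IsPositiveStable G) (ha : ∀ i, 0 < a i)
    {v : ι → ℝ} (hv : ∀ i, 0 < v i) {t : ℝ} (ht : t ∈ (alongLine v a G).roots) : t < 0 := by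
  by_contra! ht0
  have hroot := (Polynomial.isRoot_of_mem_roots ht).eq_zero
  rw [eval_alongLine] at hroot
  refine (hG.pos _ fun i ↦ ?_).ne' hroot
  simpa using add_pos_of_pos_of_nonneg (hv i) (mul_nonneg ht0 (ha i).le)

theorem eval_zero_alongLine_pos (hG : IsPositiveStable G) {v : ι → ℝ} (hv : ∀ i, 0 < v i) :
    0 < (alongLine v a G).eval 0 := by
  simpa [eval_alongLine] using hG.pos v hv

protected theorem dirDeriv (hG : IsPositiveStable G) (hn : G.IsHomogeneous (n + 1))
    (ha : ∀ i, 0 < a i) : IsPositiveStable (dirDeriv a G) where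
  stable z hz h := by
    have hdeg := hG.natDegree_alongLine hn ha z
    -- Gauss–Lucas: the critical points of the restriction lie in the lower half plane
    have hroots : (alongLine z a G).rootSet ℂ ⊆ {t : ℂ | t.im < 0} := fun t ht ↦
      hG.im_neg_of_aeval_alongLine_eq_zero ha hz <| by
        simpa using Polynomial.aeval_eq_zero_of_mem_rootSet ht
    have hcrit : (0 : ℂ) ∈ (alongLine z a G).derivative.rootSet ℂ := by
      have hderiv : (alongLine z a G).derivative ≠ 0 := by
        intro h0
        have := Polynomial.derivative_eq_zero.mp h0
        lia
      rw [Polynomial.mem_rootSet]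
      refine ⟨hderiv, ?_⟩
      rw [derivative_alongLine, aeval_alongLine]
      simpa using h
    have h0 := convexHull_min hroots (convex_halfSpace_im_lt 0)
      (Polynomial.rootSet_derivative_subset_convexHull_rootSet
        (Polynomial.natDegree_pos_iff_degree_pos.mp (by lia)) hcrit)
    simp at h0
  pos v hv := by
    have h := eval_zero_derivative_pos (hG.splits_alongLine ha v)
      (by rw [hG.natDegree_alongLine hn ha]; lia)
      (fun _ ↦ hG.neg_of_mem_roots_alongLine ha hv) (hG.eval_zero_alongLine_pos hv)
    simpa [derivative_alongLine, eval_alongLine] using h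

theorem mul_le_eval_dirDeriv (hG : IsPositiveStable G) (hn : G.IsHomogeneous (n + 1))
    (hn0 : n ≠ 0) (ha : ∀ i, 0 < a i) {v : ι → ℝ} (hv : ∀ i, 0 < v i) {b : ℝ}
    (hb : ∀ t, 0 < t → b * t ≤ MvPolynomial.eval (v + t • a) G) :
    (n / (n + 1) : ℝ) ^ n * b ≤ MvPolynomial.eval v (dirDeriv a G) := by
  have h := mul_le_eval_zero_derivative (hG.splits_alongLine ha v)
    (fun _ ↦ hG.neg_of_mem_roots_alongLine ha hv) (hG.eval_zero_alongLine_pos hv) hn0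
    (hG.natDegree_alongLine hn ha v) (by simpa only [eval_alongLine] using hb)
  simpa [derivative_alongLine, eval_alongLine] using h

-- Gurvits' inequality: `c` is a lower bound for the capacity of `G` along the directions `a j`.
theorem mul_le_eval_zero_iterDirDeriv {a : Fin n → ι → ℝ} (ha : ∀ j i, 0 < a j i)
    (hG : IsPositiveStable G) (hn : G.IsHomogeneous n) {c : ℝ}
    (hc : ∀ x : Fin n → ℝ, (∀ j, 0 < x j) →
      c * ∏ j, x j ≤ MvPolynomial.eval (∑ j, x j • a j) G) :
    (n.factorial / n ^ n : ℝ) * c ≤ MvPolynomial.eval 0 (iterDirDeriv a G) := by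
  induction n generalizing G c with
  | zero => simpa [iterDirDeriv] using hc 0
  | succ n ih =>
    rcases eq_or_ne n 0 with rfl | hn0
    · have hzero : MvPolynomial.eval 0 (iterDirDeriv a G) = MvPolynomial.eval (a 0) G :=
        eval_zero_dirDeriv (a 0) hn
      rw [hzero]
      simpa using hc 1
    have hstep : ∀ x : Fin n → ℝ, (∀ j, 0 < x j) → (n / (n + 1) : ℝ) ^ n * c * ∏ j, x j ≤
        MvPolynomial.eval (∑ j, x j • a j.succ) (dirDeriv (a 0) G) := by
      intro x hx
      have : NeZero n := ⟨hn0⟩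
      have hv : ∀ i, 0 < (∑ j, x j • a j.succ) i := fun i ↦ by
        rw [Finset.sum_apply]
        exact Finset.sum_pos (fun j _ ↦ mul_pos (hx j) (ha _ _)) Finset.univ_nonempty
      rw [mul_assoc]
      refine hG.mul_le_eval_dirDeriv hn hn0 (ha 0) hv fun t ht ↦ ?_
      have h := hc (Fin.cons t x) (Fin.forall_fin_succ.mpr ⟨ht, hx⟩)
      simp only [Fin.prod_univ_succ, Fin.sum_univ_succ, Fin.cons_zero, Fin.cons_succ] at h
      rwa [add_comm, mul_assoc, mul_comm _ t]
    have hconst : ((n + 1).factorial / (n + 1 : ℕ) ^ (n + 1) : ℝ) =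
        n.factorial / n ^ n * (n / (n + 1)) ^ n := by
      rw [Nat.factorial_succ, pow_succ, div_pow]
      push_cast
      field_simp
    calc ((n + 1).factorial / (n + 1 : ℕ) ^ (n + 1) : ℝ) * c
        = n.factorial / n ^ n * ((n / (n + 1)) ^ n * c) := by rw [hconst, mul_assoc]
      _ ≤ MvPolynomial.eval 0 (iterDirDeriv (Fin.tail a) (dirDeriv (a 0) G)) :=
        ih (fun j ↦ ha j.succ) (hG.dirDeriv hn (ha 0)) (isHomogeneous_dirDeriv _ hn) hstep

end IsPositiveStable

section Permanent

variable {R : Type*} [CommSemiring R]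

theorem derivation_prod {A ι : Type*} [CommSemiring A] [Algebra R A] [DecidableEq ι]
    (D : Derivation R A A) (s : Finset ι) (f : ι → A) :
    D (∏ i ∈ s, f i) = ∑ i ∈ s, D (f i) * ∏ j ∈ s.erase i, f j := by
  induction s using Finset.induction_on with
  | empty => simp
  | insert b s hb ih =>
    have herase : ∀ i ∈ s, ∏ j ∈ (insert b s).erase i, f j = f b * ∏ j ∈ s.erase i, f j := by
      intro i hi
      rw [Finset.erase_insert_of_ne (ne_of_mem_of_not_mem hi hb).symm, Finset.prod_insert]
      exact fun h ↦ hb (Finset.mem_of_mem_erase h)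
    rw [Finset.prod_insert hb, Derivation.leibniz, ih, Finset.sum_insert hb,
      Finset.erase_insert hb, smul_eq_mul, smul_eq_mul, Finset.mul_sum, add_comm, mul_comm]
    congr 1
    refine Finset.sum_congr rfl fun i hi ↦ ?_
    rw [herase i hi, mul_left_comm]

theorem continuous_permanent {n : Type*} [Fintype n] [DecidableEq n] [TopologicalSpace R]
    [IsTopologicalSemiring R] :
    Continuous (Matrix.permanent : Matrix n n R → R) := by
  unfold Matrix.permanent
  fun_prop

theorem permanent_submatrix_equiv {m n : Type*} [Fintype m] [DecidableEq m] [Fintype n]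
    [DecidableEq n] (e : m ≃ n) (A : Matrix n n R) :
    (A.submatrix e e).permanent = A.permanent := by
  refine Fintype.sum_equiv e.permCongr _ _ fun σ ↦ ?_
  exact Fintype.prod_equiv e _ _ fun i ↦ by simp

theorem permanent_of_ite {n : Type*} [Fintype n] [DecidableEq n]
    (P : n → n → Prop) [DecidableRel P] :
    (Matrix.of fun i j ↦ if P i j then (1 : R) else 0).permanent =
      Nat.card {σ : Equiv.Perm n // ∀ j, P (σ j) j} := by
  simp [Matrix.permanent, Finset.prod_boole, Nat.card_eq_fintype_card, Fintype.card_subtype]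

theorem permanent_succ_column_zero {n : ℕ} (M : Matrix (Fin (n + 1)) (Fin (n + 1)) R) :
    M.permanent =
      ∑ p, M p 0 * (M.submatrix (fun i ↦ Equiv.swap 0 p i.succ) Fin.succ).permanent := by
  simp only [Matrix.permanent, Finset.mul_sum]
  rw [← Equiv.Perm.decomposeFin.symm.sum_comp, Fintype.sum_prod_type]
  simp [Fin.prod_univ_succ]

theorem prod_erase_eq_prod_swap_succ {M : Type*} [CommMonoid M] {n : ℕ} (f : Fin (n + 1) → M)
    (p : Fin (n + 1)) :
    ∏ i ∈ Finset.univ.erase p, f i = ∏ i : Fin n, f (Equiv.swap 0 p i.succ) := by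
  refine (Finset.prod_bij (fun i _ ↦ Equiv.swap 0 p i.succ) ?_ ?_ ?_ fun _ _ ↦ rfl).symm
  · intro i _
    simp [Equiv.swap_apply_eq_iff]
  · intro i _ j _ h
    simpa using h
  · intro j hj
    have hj0 : Equiv.swap 0 p j ≠ 0 := by
      simpa [Equiv.swap_apply_eq_iff] using Finset.ne_of_mem_erase hj
    obtain ⟨i, hi⟩ := Fin.exists_succ_eq.mpr hj0
    exact ⟨i, Finset.mem_univ i, by rw [hi, Equiv.swap_apply_self]⟩

theorem iterDirDeriv_prod_eq_permanent {ι : Type*} {n : ℕ} {L : Fin n → MvPolynomial ι R}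
    {a : Fin n → ι → R} {M : Matrix (Fin n) (Fin n) R}
    (hL : ∀ i j, dirDeriv (a j) (L i) = MvPolynomial.C (M i j)) :
    iterDirDeriv a (∏ i, L i) = MvPolynomial.C M.permanent := by
  induction n with
  | zero => simp [iterDirDeriv, Matrix.permanent_isEmpty]
  | succ n ih =>
    calc iterDirDeriv a (∏ i, L i)
        = iterDirDeriv (Fin.tail a)
            (∑ p, M p 0 • ∏ i : Fin n, L (Equiv.swap 0 p i.succ)) := by
          simp only [iterDirDeriv, LinearMap.comp_apply, Derivation.coeFn_coe, derivation_prod, hL,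
            prod_erase_eq_prod_swap_succ, MvPolynomial.C_mul']
      _ = ∑ p, M p 0 • MvPolynomial.C
            (M.submatrix (fun i ↦ Equiv.swap 0 p i.succ) Fin.succ).permanent := by
          rw [map_sum]
          refine Finset.sum_congr rfl fun p _ ↦ ?_
          rw [map_smul]
          exact congrArg _ (ih fun i j ↦ hL _ j.succ)
      _ = MvPolynomial.C M.permanent := by
          rw [permanent_succ_column_zero, map_sum]
          simp only [map_mul, MvPolynomial.C_mul']

end Permanent

section VanDerWaerden

open Matrix

theorem prod_le_prod_mulVec_of_mem_doublyStochastic {n : Type*} [Fintype n] [DecidableEq n]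
    {A : Matrix n n ℝ} (hA : A ∈ doublyStochastic ℝ n) {x : n → ℝ} (hx : ∀ j, 0 ≤ x j) :
    ∏ j, x j ≤ ∏ i, (A *ᵥ x) i := by
  calc ∏ j, x j = ∏ j, ∏ i, x j ^ A i j := by
        refine Finset.prod_congr rfl fun j _ ↦ ?_
        rw [← Real.rpow_sum_of_nonneg (hx j) fun i _ ↦ nonneg_of_mem_doublyStochastic hA,
          sum_col_of_mem_doublyStochastic hA, Real.rpow_one]
    _ = ∏ i, ∏ j, x j ^ A i j := Finset.prod_comm
    _ ≤ ∏ i, (A *ᵥ x) i := by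
        refine Finset.prod_le_prod
          (fun i _ ↦ Finset.prod_nonneg fun j _ ↦ Real.rpow_nonneg (hx j) _) fun i _ ↦ ?_
        exact Real.geom_mean_le_arith_mean_weighted Finset.univ (A i) x
          (fun j _ ↦ nonneg_of_mem_doublyStochastic hA)
          (sum_row_of_mem_doublyStochastic hA i) fun j _ ↦ hx j

theorem mul_le_permanent_of_pos {n : ℕ} {A : Matrix (Fin n) (Fin n) ℝ} (hA : ∀ i j, 0 < A i j)
    {c : ℝ} (hc : ∀ x : Fin n → ℝ, (∀ j, 0 < x j) → c * ∏ j, x j ≤ ∏ i, (A *ᵥ x) i) :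
    (n.factorial / n ^ n : ℝ) * c ≤ A.permanent := by
  have hhom : (∏ i : Fin n, (MvPolynomial.X i : MvPolynomial (Fin n) ℝ)).IsHomogeneous n := by
    simpa using MvPolynomial.IsHomogeneous.prod Finset.univ
      (fun i : Fin n ↦ (MvPolynomial.X i : MvPolynomial (Fin n) ℝ)) (fun _ ↦ 1)
      fun i _ ↦ MvPolynomial.isHomogeneous_X ℝ i
  have hiter : iterDirDeriv (fun j ↦ A.col j) (∏ i, MvPolynomial.X i) =
      MvPolynomial.C A.permanent :=
    iterDirDeriv_prod_eq_permanent fun i j ↦ MvPolynomial.mkDerivation_X ..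
  have h := isPositiveStable_prod_X.mul_le_eval_zero_iterDirDeriv (a := fun j ↦ A.col j)
    (fun j i ↦ hA i j) hhom (c := c) fun x hx ↦ by
      simpa [Matrix.mulVec, dotProduct, mul_comm (x _)] using hc x hx
  rwa [hiter, MvPolynomial.eval_C] at h

theorem const_mem_doublyStochastic (n : Type*) [Fintype n] [DecidableEq n] [Nonempty n] :
    (Matrix.of fun _ _ ↦ (Fintype.card n : ℝ)⁻¹) ∈ doublyStochastic ℝ n := by
  simp [mem_doublyStochastic_iff_sum]

theorem factorial_div_pow_le_permanent_fin {n : ℕ} {A : Matrix (Fin n) (Fin n) ℝ}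
    (hA : A ∈ doublyStochastic ℝ (Fin n)) : (n.factorial / n ^ n : ℝ) ≤ A.permanent := by
  rcases eq_or_ne n 0 with rfl | hn
  · simp [permanent_isEmpty]
  have : NeZero n := ⟨hn⟩
  set J : Matrix (Fin n) (Fin n) ℝ := Matrix.of fun _ _ ↦ (Fintype.card (Fin n) : ℝ)⁻¹
  have hlim : Filter.Tendsto (fun t : ℝ ↦ (AffineMap.lineMap A J t).permanent)
      (nhdsWithin 0 (Set.Ioi 0)) (nhds A.permanent) := by
    have h := (continuous_permanent.comp (AffineMap.lineMap_continuous (p := A) (q := J))).tendsto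
      (0 : ℝ)
    simp only [Function.comp_def, AffineMap.lineMap_apply_zero] at h
    exact h.mono_left nhdsWithin_le_nhds
  refine ge_of_tendsto hlim ?_
  filter_upwards [Ioo_mem_nhdsGT one_pos] with t ht
  have hds : AffineMap.lineMap A J t ∈ doublyStochastic ℝ (Fin n) :=
    convex_doublyStochastic.lineMap_mem hA (const_mem_doublyStochastic _)
      (Set.Ioo_subset_Icc_self ht)
  have hpos : ∀ i j, 0 < (AffineMap.lineMap A J t : Matrix _ _ ℝ) i j := by
    intro i j
    have hAij : 0 ≤ (1 - t) * A i j :=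
      mul_nonneg (sub_nonneg.mpr ht.2.le) (nonneg_of_mem_doublyStochastic hA)
    have hJij : 0 < t * J i j :=
      mul_pos ht.1 (inv_pos.mpr (Nat.cast_pos.mpr Fintype.card_pos))
    simpa [AffineMap.lineMap_apply_module] using add_pos_of_nonneg_of_pos hAij hJij
  simpa using mul_le_permanent_of_pos hpos (c := 1) fun x hx ↦ by
    simpa using prod_le_prod_mulVec_of_mem_doublyStochastic hds fun j ↦ (hx j).le

theorem factorial_div_pow_le_permanent {n : Type*} [Fintype n] [DecidableEq n] {A : Matrix n n ℝ}
    (hA : A ∈ doublyStochastic ℝ n) :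
    ((Fintype.card n).factorial / Fintype.card n ^ Fintype.card n : ℝ) ≤ A.permanent := by
  set e := Fintype.equivFin n
  have hB : A.submatrix e.symm e.symm ∈ doublyStochastic ℝ (Fin (Fintype.card n)) :=
    reindex_mem_doublyStochastic (e₁ := e) (e₂ := e) hA
  simpa only [permanent_submatrix_equiv] using factorial_div_pow_le_permanent_fin hB

theorem pow_mul_factorial_div_pow_le_permanent {n : Type*} [Fintype n] [DecidableEq n]
    {A : Matrix n n ℝ} (hA : ∀ i j, 0 ≤ A i j) {s : ℝ} (hs : 0 ≤ s)
    (hrow : ∀ i, ∑ j, A i j = s) (hcol : ∀ j, ∑ i, A i j = s) :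
    s ^ Fintype.card n * ((Fintype.card n).factorial / Fintype.card n ^ Fintype.card n : ℝ) ≤
      A.permanent := by
  obtain ⟨B, hB, rfl⟩ := (exists_mem_doublyStochastic_eq_smul_iff hs).mpr ⟨hA, hrow, hcol⟩
  rw [permanent_smul]
  gcongr
  exact factorial_div_pow_le_permanent hB

end VanDerWaerden

section LatinRectangle

theorem sum_ite_forall_ne (R : Type*) [Semiring R] {m n : Type*} [Fintype m] [Fintype n]
    {g : m → n} [DecidablePred fun x ↦ ∀ i, g i ≠ x] (hg : Function.Injective g) :
    ∑ x, (if ∀ i, g i ≠ x then (1 : R) else 0) = (Fintype.card n - Fintype.card m : ℕ) := by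
  classical
  have hcompl : Finset.univ.filter (fun x ↦ ∀ i, g i ≠ x) = (Finset.univ.image g)ᶜ := by
    ext x
    simp
  rw [Finset.sum_boole, hcompl, Finset.card_compl, Finset.card_image_of_injective _ hg,
    Finset.card_univ]

/-- `T` is a latin rectangle with `r` rows and `d` columns: no symbol is repeated in a row or in
a column. For `r = d` these are the latin squares. -/
def IsLatinRectangle {r d : ℕ} (T : Fin r → Fin d → Fin d) : Prop :=
  (∀ i, Function.Injective (T i)) ∧ ∀ j, Function.Injective (fun i ↦ T i j)

/-- The number of latin rectangles with `r` rows and `d` columns. -/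
noncomputable def numLatinRectangles (r d : ℕ) : ℕ :=
  {T : Fin r → Fin d → Fin d | IsLatinRectangle T}.ncard

variable {r d : ℕ} {T : Fin r → Fin d → Fin d}

theorem isLatinRectangle_cons_iff {t : Fin d → Fin d} :
    IsLatinRectangle (Fin.cons t T : Fin (r + 1) → Fin d → Fin d) ↔
      (Function.Injective t ∧ ∀ j i, T i j ≠ t j) ∧ IsLatinRectangle T := by
  have hcol : ∀ j, (fun i ↦ (Fin.cons t T : Fin (r + 1) → Fin d → Fin d) i j) =
      Fin.cons (t j) fun i ↦ T i j := fun j ↦ by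
    ext i
    cases i using Fin.cases <;> rfl
  simp only [IsLatinRectangle, Fin.forall_fin_succ, Fin.cons_zero, Fin.cons_succ, hcol,
    Fin.cons_injective_iff, Set.mem_range, not_exists, forall_and]
  tauto

/-- The 0/1 matrix whose `(s, j)` entry says whether the symbol `s` is absent from column `j`
of `T`; its permanent counts the ways to add a row to a latin rectangle. -/
def availabilityMatrix (T : Fin r → Fin d → Fin d) : Matrix (Fin d) (Fin d) ℝ :=
  Matrix.of fun s j ↦ if ∀ i, T i j ≠ s then 1 else 0

theorem permanent_availabilityMatrix (T : Fin r → Fin d → Fin d) :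
    (availabilityMatrix T).permanent =
      Nat.card {σ : Equiv.Perm (Fin d) // ∀ j i, T i j ≠ σ j} :=
  permanent_of_ite _

theorem IsLatinRectangle.sum_col_availabilityMatrix (hT : IsLatinRectangle T) (j : Fin d) :
    ∑ s, availabilityMatrix T s j = (d - r : ℕ) := by
  simpa only [availabilityMatrix, Matrix.of_apply, Fintype.card_fin] using
    sum_ite_forall_ne ℝ (hT.2 j)

theorem IsLatinRectangle.sum_row_availabilityMatrix (hT : IsLatinRectangle T) (s : Fin d) :
    ∑ j, availabilityMatrix T s j = (d - r : ℕ) := by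
  choose pos hpos using fun i ↦ Finite.surjective_of_injective (hT.1 i) s
  have hinj : Function.Injective pos := fun i i' h ↦
    hT.2 (pos i) ((hpos i).trans (h ▸ (hpos i').symm))
  have havail : ∀ j, (∀ i, T i j ≠ s) ↔ ∀ i, pos i ≠ j := fun j ↦
    forall_congr' fun i ↦ not_congr <| by
      rw [← hpos i, (hT.1 i).eq_iff, eq_comm]
  simpa only [availabilityMatrix, Matrix.of_apply, havail, Fintype.card_fin] using
    sum_ite_forall_ne ℝ hinj

theorem IsLatinRectangle.le_card_extensions (hT : IsLatinRectangle T) :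
    ((d - r : ℕ) ^ d * (d.factorial / d ^ d) : ℝ) ≤
      Nat.card {σ : Equiv.Perm (Fin d) // ∀ j i, T i j ≠ σ j} := by
  have hnonneg : ∀ s j, 0 ≤ availabilityMatrix T s j := fun s j ↦ by
    unfold availabilityMatrix
    rw [Matrix.of_apply]
    positivity
  simpa [permanent_availabilityMatrix] using
    pow_mul_factorial_div_pow_le_permanent hnonneg (Nat.cast_nonneg (d - r))
      hT.sum_row_availabilityMatrix hT.sum_col_availabilityMatrix

theorem card_sigma_extensions_le_numLatinRectangles_succ (r d : ℕ) :
    Nat.card (Σ T : {T : Fin r → Fin d → Fin d // IsLatinRectangle T},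
      {σ : Equiv.Perm (Fin d) // ∀ j i, T.1 i j ≠ σ j}) ≤ numLatinRectangles (r + 1) d := by
  refine Nat.card_le_card_of_injective
    (β := {T : Fin (r + 1) → Fin d → Fin d // IsLatinRectangle T})
    (fun p ↦ ⟨Fin.cons p.2.1 p.1.1,
      isLatinRectangle_cons_iff.mpr ⟨⟨p.2.1.injective, p.2.2⟩, p.1.2⟩⟩) ?_
  rintro ⟨⟨T, hT⟩, σ, hσ⟩ ⟨⟨T', hT'⟩, σ', hσ'⟩ h
  have hcons : (Fin.cons ⇑σ T : Fin (r + 1) → Fin d → Fin d) = Fin.cons ⇑σ' T' :=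
    congrArg Subtype.val h
  obtain ⟨hcoe, rfl⟩ := Fin.cons_injective2 hcons
  obtain rfl := DFunLike.coe_injective hcoe
  rfl

theorem numLatinRectangles_mul_le_succ (r d : ℕ) :
    (numLatinRectangles r d * ((d - r : ℕ) ^ d * (d.factorial / d ^ d)) : ℝ) ≤
      numLatinRectangles (r + 1) d := by
  have : Fintype {T : Fin r → Fin d → Fin d // IsLatinRectangle T} := Fintype.ofFinite _
  calc (numLatinRectangles r d * ((d - r : ℕ) ^ d * (d.factorial / d ^ d)) : ℝ)
      = ∑ _T : {T : Fin r → Fin d → Fin d // IsLatinRectangle T},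
          ((d - r : ℕ) ^ d * (d.factorial / d ^ d) : ℝ) := by
        rw [Finset.sum_const, Finset.card_univ, nsmul_eq_mul, ← Nat.card_eq_fintype_card]
        rfl
    _ ≤ ∑ T : {T : Fin r → Fin d → Fin d // IsLatinRectangle T},
          (Nat.card {σ : Equiv.Perm (Fin d) // ∀ j i, T.1 i j ≠ σ j} : ℝ) :=
        Finset.sum_le_sum fun T _ ↦ T.2.le_card_extensions
    _ ≤ numLatinRectangles (r + 1) d := by
        rw [← Nat.cast_sum, ← Nat.card_sigma]
        exact_mod_cast card_sigma_extensions_le_numLatinRectangles_succ r d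

theorem descFactorial_pow_mul_le_numLatinRectangles (r d : ℕ) :
    (d.descFactorial r ^ d * (d.factorial / d ^ d) ^ r : ℝ) ≤ numLatinRectangles r d := by
  induction r with
  | zero => simp [numLatinRectangles, IsLatinRectangle, Function.injective_of_subsingleton]
  | succ r ih =>
    calc (d.descFactorial (r + 1) ^ d * (d.factorial / d ^ d) ^ (r + 1) : ℝ)
        = d.descFactorial r ^ d * (d.factorial / d ^ d) ^ r *
            ((d - r : ℕ) ^ d * (d.factorial / d ^ d)) := by
          rw [Nat.descFactorial_succ]
          push_cast
          ring
      _ ≤ numLatinRectangles r d * ((d - r : ℕ) ^ d * (d.factorial / d ^ d)) := by gcongr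
      _ ≤ numLatinRectangles (r + 1) d := numLatinRectangles_mul_le_succ r d

end LatinRectangle

/-- The number of latin squares of order `d` is at least `d!^(2d) / d^(d^2)`. -/
theorem stmt3 (d : ℕ) (hd : 0 < d) :
    ((d.factorial : ℝ) ^ (2 * d)) / (d : ℝ) ^ (d ^ 2) ≤ (numLatinSquares d : ℝ) := by
  calc (d.factorial : ℝ) ^ (2 * d) / (d : ℝ) ^ (d ^ 2)
      = d.descFactorial d ^ d * (d.factorial / d ^ d) ^ d := by
        rw [Nat.descFactorial_self, div_pow, ← pow_mul, two_mul, pow_add, sq, mul_div_assoc]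
    _ ≤ numLatinRectangles d d := descFactorial_pow_mul_le_numLatinRectangles d d
    _ = numLatinSquares d := rfl
end

section
/- Let G be a simple d-uniform hypergraph on n vertices with d ≥ 4 and d dividing n. Then the number of 1-factors of G satisfies φ(G) ≤ (per M(G) / μ(n,d))^{1/d}, where μ(n,d) = (d!^2 / (d^d · d!^{1/d}))^n. -/
open scoped Classical in
/-- The permanent of a `d`-dimensional matrix of order `n`. -/
noncomputable def mper {n d : ℕ} (A : (Fin d → Fin n) → ℕ) : ℕ :=
  ∑ σ ∈ Finset.univ.filter (fun σ : Fin d → Equiv.Perm (Fin n) =>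
      ∀ h : 0 < d, σ ⟨0, h⟩ = Equiv.refl (Fin n)),
    ∏ i : Fin n, A (fun k => σ k i)

/-- `P` is a 1-factor of the hypergraph with hyperedge set `W`. -/
def IsOneFactor {n : ℕ} (W : Finset (Finset (Fin n))) (P : Finset (Finset (Fin n))) : Prop :=
  P ⊆ W ∧ ∀ v : Fin n, ∃! e, e ∈ P ∧ v ∈ e

/-- The number of 1-factors of the hypergraph with hyperedge set `W`. -/
noncomputable def numOneFactors {n : ℕ} (W : Finset (Finset (Fin n))) : ℕ :=
  {P : Finset (Finset (Fin n)) | IsOneFactor W P}.ncard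

open scoped Classical in
/-- The `d`-dimensional adjacency matrix of the `d`-uniform hypergraph with
hyperedge set `W` on `n` vertices. -/
noncomputable def adjMatrix (n d : ℕ) (W : Finset (Finset (Fin n))) :
    (Fin d → Fin n) → ℕ :=
  fun α => if Function.Injective α ∧ Finset.image α Finset.univ ∈ W then 1 else 0

/-!
Call a sequence of `n` hyperedges regular if every vertex lies in exactly `d` of them, and count
pairs of a regular sequence with some extra structure in two ways.

An ordered `d`-tuple of 1-factors together with an enumeration of its `n` hyperedges is a regular
sequence with a colouring whose colour classes are the 1-factors, so `φ(G) ^ d * n!` is at most the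
number of coloured regular sequences. Around each vertex a colouring is a bijection onto the `d`
colours, so by Shearer's inequality a sequence has at most `(d! ^ (1 / d)) ^ n` colourings.

Conversely, `n! * per M(G)` counts the regular sequences together with an ordered factorization of
the `d`-regular bipartite incidence graph into `d` perfect matchings. Removing matchings one at a
time, Schrijver's bound on the number of perfect matchings gives each sequence at least
`(d! ^ 2 / d ^ d) ^ n` such factorizations. Schrijver's bound is obtained by Gurvits' method: the
number of perfect matchings is the coefficient of `∏ X j` in a product of linear forms that is
stable, and each differentiation at zero costs the capacity at most a factor `gurvitsFactor d`.
-/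

section Univariate

open Polynomial
open scoped ComplexOrder

lemma norm_eval_le_norm_eval_of_roots {K : Type*} [NormedField K] {f : K[X]} (hf : f.Splits)
    {z w : K} (h : ∀ u ∈ f.roots, ‖z - u‖ ≤ ‖w - u‖) : ‖f.eval z‖ ≤ ‖f.eval w‖ := by
  have norm_eval (x : K) : ‖f.eval x‖ = ‖f.leadingCoeff‖ * (f.roots.map (‖x - ·‖)).prod := by
    rw [hf.eval_eq_prod_roots, norm_mul]
    congr 1
    exact (map_multiset_prod (normHom : K →*₀ ℝ) _).trans (by rw [Multiset.map_map]; rfl)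
  rw [norm_eval, norm_eval]
  gcongr
  exact Multiset.prod_map_le_prod_map₀ _ _ (fun _ _ => norm_nonneg _) h

lemma prod_one_add_le_one_add_sum_div_pow {s : Multiset ℝ} (hs : ∀ b ∈ s, 0 ≤ b) {k : ℕ}
    (hk : s.card ≤ k) : (s.map (1 + ·)).prod ≤ (1 + s.sum / k) ^ k := by
  rcases Nat.eq_zero_or_pos k with rfl | hk0
  · simp [Multiset.card_eq_zero.1 (Nat.le_zero.1 hk)]
  set y := s.sum / k with hy
  have hy0 : 0 < 1 + y := by
    have : 0 ≤ s.sum := Multiset.sum_nonneg hs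
    positivity
  have tangent (b : ℝ) : 1 + b ≤ (1 + y) * Real.exp ((b - y) / (1 + y)) := by
    calc 1 + b = (1 + y) * ((b - y) / (1 + y) + 1) := by field_simp; ring
      _ ≤ _ := by gcongr; exact Real.add_one_le_exp _
  -- Padding with zeros changes neither side and makes the exponents cancel exactly.
  set s' := s + Multiset.replicate (k - s.card) 0 with hs'
  have card_s' : s'.card = k := by simp [hs', hk]
  have sum_exponents : (s'.map fun b => (b - y) / (1 + y)).sum = 0 := by
    have sum_s' : s'.sum = k * y := by
      have : (k : ℝ) ≠ 0 := by positivity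
      simp only [hs', Multiset.sum_add, Multiset.sum_replicate, smul_zero, add_zero, hy]
      field_simp
    rw [Multiset.sum_map_div, Multiset.sum_map_sub, Multiset.map_id', sum_s']
    simp [card_s']
  have prod_exp : (s'.map fun b => Real.exp ((b - y) / (1 + y))).prod = 1 := by
    have := Real.exp_multiset_sum (s'.map fun b => (b - y) / (1 + y))
    rwa [sum_exponents, Real.exp_zero, Multiset.map_map, eq_comm] at this
  calc (s.map (1 + ·)).prod = (s'.map (1 + ·)).prod := by simp [hs']
    _ ≤ (s'.map fun b => (1 + y) * Real.exp ((b - y) / (1 + y))).prod := by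
      refine Multiset.prod_map_le_prod_map₀ _ _ (fun b hb => ?_) fun b _ => tangent b
      have : 0 ≤ b := by
        rcases Multiset.mem_add.1 hb with hb | hb
        · exact hs b hb
        · exact (Multiset.eq_of_mem_replicate hb).ge
      positivity
    _ = (1 + y) ^ k := by
      rw [Multiset.prod_map_mul, Multiset.map_const', Multiset.prod_replicate, card_s', prod_exp,
        mul_one]

lemma eval_add_eq_eval_mul_prod {K : Type*} [Field K] {f : K[X]} (hf : f.Splits) {e : K}
    (he : f.eval e ≠ 0) (t : K) :
    f.eval (e + t) = f.eval e * (f.roots.map fun u => 1 + t * (1 / (e - u))).prod := by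
  rw [hf.eval_eq_prod_roots, hf.eval_eq_prod_roots, mul_assoc, ← Multiset.prod_map_mul]
  congr 2
  refine Multiset.map_congr rfl fun u hu => ?_
  have : e - u ≠ 0 := sub_ne_zero.2 fun h => he (h ▸ isRoot_of_mem_roots hu)
  field_simp
  ring

lemma exists_map_one_div_sub_roots_eq {f : ℂ[X]} (hf : ∀ u, f.eval u = 0 → u ≤ 0) {e : ℝ}
    (he : 0 < e) : ∃ T : Multiset ℝ, (∀ b ∈ T, 0 ≤ b) ∧
      (f.roots.map fun u => 1 / ((e : ℂ) - u)) = T.map fun b : ℝ => (b : ℂ) := by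
  refine ⟨f.roots.map fun u => 1 / (e - u.re), ?_, ?_⟩
  · simp only [Multiset.mem_map]
    rintro _ ⟨u, hu, rfl⟩
    have := (Complex.nonpos_iff.1 (hf u (isRoot_of_mem_roots hu))).1
    exact one_div_nonneg.2 (by linarith)
  · rw [Multiset.map_map]
    refine Multiset.map_congr rfl fun u hu => ?_
    have him := (Complex.nonpos_iff.1 (hf u (isRoot_of_mem_roots hu))).2
    have u_real : u = u.re := Complex.ext rfl (by simpa using him)
    rw [u_real]
    simp

lemma norm_eval_add_le {f : ℂ[X]} (hf : ∀ u, f.eval u = 0 → u ≤ 0) {k : ℕ}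
    (hk : f.natDegree ≤ k) {e t : ℝ} (he : 0 < e) (ht : 0 ≤ t) :
    ‖f.eval ((e + t : ℝ) : ℂ)‖ ≤
      ‖f.eval (e : ℂ)‖ * (1 + t * (‖f.derivative.eval (e : ℂ)‖ / ‖f.eval (e : ℂ)‖) / k) ^ k := by
  have hs := IsAlgClosed.splits f
  have hfe : f.eval (e : ℂ) ≠ 0 := fun h =>
    (Complex.real_le_real.1 (by simpa using hf e h)).not_gt he
  obtain ⟨T, T_nonneg, hT⟩ := exists_map_one_div_sub_roots_eq hf he
  have derivative_div : ‖f.derivative.eval (e : ℂ)‖ / ‖f.eval (e : ℂ)‖ = T.sum := by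
    have hsum : ((T.sum : ℝ) : ℂ) = (T.map fun b : ℝ => (b : ℂ)).sum :=
      map_multiset_sum Complex.ofRealHom T
    rw [← norm_div, hs.eval_derivative_div_eval_of_ne_zero hfe, hT, ← hsum, Complex.norm_real,
      Real.norm_of_nonneg (Multiset.sum_nonneg T_nonneg)]
  have eval_add : f.eval ((e + t : ℝ) : ℂ) =
      f.eval (e : ℂ) * (((T.map (t * ·)).map (1 + ·)).prod : ℝ) := by
    have hmap := congrArg (Multiset.map fun x => 1 + (t : ℂ) * x) hT
    rw [Multiset.map_map] at hmap
    rw [Complex.ofReal_add, eval_add_eq_eval_mul_prod hs hfe,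
      ← Complex.ofRealHom_eq_coe (Multiset.prod _), map_multiset_prod]
    congr 2
    refine hmap.trans ?_
    simp [Multiset.map_map]
  have tT_nonneg : ∀ b ∈ T.map (t * ·), 0 ≤ b := by
    simp only [Multiset.mem_map]
    rintro _ ⟨b, hb, rfl⟩
    exact mul_nonneg ht (T_nonneg b hb)
  have sum_tT : (T.map (t * ·)).sum = t * T.sum := by
    rw [Multiset.sum_map_mul_left, Multiset.map_id']
  have prod_nonneg : 0 ≤ ((T.map (t * ·)).map (1 + ·)).prod := by
    refine Multiset.prod_nonneg fun a ha => ?_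
    obtain ⟨b, hb, rfl⟩ := Multiset.mem_map.1 ha
    have := tT_nonneg b hb
    positivity
  have card_T : (T.map (t * ·)).card ≤ k := by
    have := congrArg Multiset.card hT
    simp only [Multiset.card_map] at this ⊢
    exact this ▸ f.card_roots'.trans hk
  rw [eval_add, norm_mul, Complex.norm_real, Real.norm_of_nonneg prod_nonneg, derivative_div,
    ← sum_tT]
  gcongr
  exact prod_one_add_le_one_add_sum_div_pow tT_nonneg card_T

/-- Gurvits' function `g(k) = ((k - 1) / k) ^ (k - 1)`, the factor by which the capacity of a
polynomial can drop when one differentiates once at `0` in a variable of degree at most `k`.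
The junk value at `0` is `g(0) = 1 = g(1)`. -/
noncomputable def gurvitsFactor (k : ℕ) : ℝ := (((k : ℝ) - 1) / k) ^ (k - 1)

lemma gurvitsFactor_succ (k : ℕ) : gurvitsFactor (k + 1) = ((k : ℝ) / (k + 1)) ^ k := by
  simp [gurvitsFactor]

lemma gurvitsFactor_pos (k : ℕ) : 0 < gurvitsFactor k := by
  rcases k with _ | _ | k
  · simp [gurvitsFactor]
  · simp [gurvitsFactor]
  · rw [gurvitsFactor_succ]
    positivity

lemma le_of_forall_pos_mul_le_add_mul {a b c : ℝ} (h : ∀ t, 0 < t → c * t ≤ a + b * t) :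
    c ≤ b := by
  by_contra! hbc
  have := h ((|a| + 1) / (c - b)) (by have := sub_pos.2 hbc; positivity)
  have hmul : (c - b) * ((|a| + 1) / (c - b)) = |a| + 1 := mul_div_cancel₀ _ (sub_pos.2 hbc).ne'
  linarith [le_abs_self a]

lemma mul_gurvitsFactor_le {a b c : ℝ} {k : ℕ} (ha : 0 < a) (hb : 0 ≤ b)
    (h : ∀ t, 0 < t → c * t ≤ a * (1 + t * (b / a) / k) ^ k) : c * gurvitsFactor k ≤ b := by
  rcases k with _ | _ | k
  · simpa [gurvitsFactor] using
      (le_of_forall_pos_mul_le_add_mul (b := 0) fun t ht => by simpa using h t ht).trans hb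
  · rw [gurvitsFactor_succ, pow_zero, mul_one]
    refine le_of_forall_pos_mul_le_add_mul (a := a) fun t ht => (h t ht).trans_eq ?_
    simp only [zero_add, Nat.cast_one, div_one, pow_one]
    field_simp
  rw [gurvitsFactor_succ]
  rcases hb.eq_or_lt with rfl | hb
  · have : c ≤ 0 := le_of_forall_pos_mul_le_add_mul fun t ht => by simpa using h t ht
    exact mul_nonpos_of_nonpos_of_nonneg this (by positivity)
  -- The right-hand side divided by `t` is smallest where `t * b / (k * a) = 1 / (k - 1)`.
  set x : ℝ := ((k + 1 : ℕ) : ℝ) / (((k + 1 : ℕ) : ℝ) + 1) with hx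
  have hxpos : 0 < x := by positivity
  have hopt := h (a / (b * x)) (by positivity)
  have : 1 + a / (b * x) * (b / a) / ((k + 1 + 1 : ℕ) : ℝ) = x⁻¹ := by
    rw [hx]; push_cast; field_simp
  rw [this, inv_pow, pow_succ, mul_inv, ← div_eq_mul_inv] at hopt
  rw [← mul_div_assoc, div_le_iff₀ (by positivity)] at hopt
  refine le_of_mul_le_mul_left ?_ ha
  have h2 : a * ((x ^ (k + 1))⁻¹ / x) * (b * x) = a * b / x ^ (k + 1) := by field_simp
  rw [h2, le_div_iff₀ (by positivity)] at hopt
  linarith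

lemma mul_gurvitsFactor_le_norm_eval_derivative {f : ℂ[X]} (hf : ∀ u, f.eval u = 0 → u ≤ 0)
    {k : ℕ} (hk : f.natDegree ≤ k) {c : ℝ} (hc : 0 ≤ c)
    (h : ∀ t : ℝ, 0 < t → c * t ≤ ‖f.eval (t : ℂ)‖) {e : ℝ} (he : 0 < e) :
    c * gurvitsFactor k ≤ ‖f.derivative.eval (e : ℂ)‖ := by
  have hfe : f.eval (e : ℂ) ≠ 0 := fun h =>
    (Complex.real_le_real.1 (by simpa using hf e h)).not_gt he
  refine mul_gurvitsFactor_le (norm_pos_iff.2 hfe) (norm_nonneg _) fun t ht => ?_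
  calc c * t ≤ c * (e + t) := by gcongr; linarith
    _ ≤ ‖f.eval ((e + t : ℝ) : ℂ)‖ := h _ (by positivity)
    _ ≤ _ := norm_eval_add_le hf hk he ht.le

lemma eval_derivative_ne_zero_of_re_pos {f : ℂ[X]} (hf : ∀ u, f.eval u = 0 → u.re ≤ 0)
    (hdeg : 0 < f.degree) {w : ℂ} (hw : 0 < w.re) : f.derivative.eval w ≠ 0 := by
  intro h0
  have hder : f.derivative ≠ 0 := by
    simpa [derivative_eq_zero] using (natDegree_pos_iff_degree_pos.2 hdeg).ne'
  have mem_hull := rootSet_derivative_subset_convexHull_rootSet hdeg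
    (by simpa [mem_rootSet, hder] using h0 : w ∈ f.derivative.rootSet ℂ)
  have hull_le : convexHull ℝ (f.rootSet ℂ) ⊆ {z | z.re ≤ 0} :=
    convexHull_min (fun u hu => hf u (by simpa using (mem_rootSet.1 hu).2))
      (convex_halfSpace_re_le 0)
  exact (hull_le mem_hull).not_gt hw

end Univariate

section Capacity

open MvPolynomial
open scoped ComplexOrder

lemma eval_mul_of_isHomogeneous {σ R : Type*} [CommSemiring R] {p : MvPolynomial σ R} {m : ℕ}
    (hp : p.IsHomogeneous m) (l : R) (z : σ → R) :
    eval (fun i => l * z i) p = l ^ m * eval z p := by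
  simp only [eval_eq, Finset.mul_sum]
  refine Finset.sum_congr rfl fun d hd => ?_
  have hdeg : ∑ i ∈ d.support, d i = m := by
    rw [hp.degree_eq_sum_deg_support hd]
  simp only [mul_pow, Finset.prod_mul_distrib, Finset.prod_pow_eq_pow_sum, hdeg]
  ring

/-- Stability with respect to the open right half plane (Hurwitz stability): `p` has no zero all of
whose coordinates have positive real part. -/
def IsHStable {σ : Type*} (p : MvPolynomial σ ℂ) : Prop :=
  ∀ z : σ → ℂ, (∀ i, 0 < (z i).re) → eval z p ≠ 0

namespace IsHStable

variable {σ : Type*} {p : MvPolynomial σ ℂ} {m : ℕ}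

lemma norm_eval_re_le_of_pos (hs : IsHStable p) (hp : p.IsHomogeneous m) {z : σ → ℂ}
    (hz : ∀ i, 0 < (z i).re) : ‖eval (fun i => ((z i).re : ℂ)) p‖ ≤ ‖eval z p‖ := by
  set f : Polynomial ℂ := aeval (fun i => Polynomial.C ((z i).re : ℂ) +
    Polynomial.X * Polynomial.C (Complex.I * (z i).im)) p with hf
  have eval_f (u : ℂ) : f.eval u = eval (fun i => (z i).re + u * (Complex.I * (z i).im)) p := by
    rw [hf, ← Polynomial.coe_aeval_eq_eval, comp_aeval_apply]
    simp [aeval_eq_eval]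
  have root_re {u : ℂ} (hu : u ∈ f.roots) : u.re = 0 := by
    by_contra hre
    have hu0 : u ≠ 0 := fun h => hre (by simp [h])
    refine hs (fun i => u.re * u⁻¹ * ((z i).re + u * (Complex.I * (z i).im))) (fun i => ?_) ?_
    · have hnorm := Complex.normSq_pos.2 hu0
      have rotated : (u.re * u⁻¹ * ((z i).re + u * (Complex.I * (z i).im)) : ℂ) =
          u.re * u⁻¹ * (z i).re + u.re * (Complex.I * (z i).im) := by field_simp
      have rotated_re : (u.re * u⁻¹ * ((z i).re + u * (Complex.I * (z i).im)) : ℂ).re =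
          u.re * u.re / Complex.normSq u * (z i).re := by
        rw [rotated]
        simp [mul_div_assoc]
      rw [rotated_re]
      exact mul_pos (div_pos (mul_self_pos.2 hre) hnorm) (hz i)
    · rw [eval_mul_of_isHomogeneous hp, ← eval_f, Polynomial.isRoot_of_mem_roots hu, mul_zero]
  have root_dist (u) (hu : u ∈ f.roots) : ‖0 - u‖ ≤ ‖1 - u‖ := by
    rw [← sq_le_sq₀ (norm_nonneg _) (norm_nonneg _), ← Complex.normSq_eq_norm_sq,
      ← Complex.normSq_eq_norm_sq]
    simp [Complex.normSq_apply, root_re hu]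
  have eval_zero : f.eval 0 = eval (fun i => ((z i).re : ℂ)) p := by simp [eval_f]
  have eval_one : f.eval 1 = eval z p := by
    simp only [eval_f, one_mul, mul_comm Complex.I, Complex.re_add_im]
  rw [← eval_zero, ← eval_one]
  exact norm_eval_le_norm_eval_of_roots (IsAlgClosed.splits f) root_dist

lemma norm_eval_re_le (hs : IsHStable p) (hp : p.IsHomogeneous m) {z : σ → ℂ}
    (hz : ∀ i, 0 ≤ (z i).re) : ‖eval (fun i => ((z i).re : ℂ)) p‖ ≤ ‖eval z p‖ := by
  have shifted : ∀ e ∈ Set.Ioi (0 : ℝ), ‖eval (fun i => ((z i).re : ℂ) + e) p‖ ≤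
      ‖eval (fun i => z i + e) p‖ := fun e he => by
    have he : 0 < e := he
    simpa using hs.norm_eval_re_le_of_pos hp (z := fun i => z i + e) fun i => by
      have := hz i
      rw [Complex.add_re, Complex.ofReal_re]
      positivity
  have hcont (y : σ → ℂ) : Continuous fun e : ℝ => ‖eval (fun i => y i + e) p‖ :=
    (continuous_eval p |>.comp (by fun_prop)).norm
  simpa using le_on_closure shifted (hcont _).continuousOn (hcont _).continuousOn
    (by simp : (0 : ℝ) ∈ closure (Set.Ioi 0))

end IsHStable

/-- Gurvits' capacity of `p`: the infimum of `|p(x)| / ∏ i, x i` over the vectors `x` with positive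
real coordinates. -/
noncomputable def capacity {σ : Type*} [Fintype σ] (p : MvPolynomial σ ℂ) : ℝ :=
  ⨅ x : {x : σ → ℝ // ∀ i, 0 < x i}, ‖eval (fun i => (x.1 i : ℂ)) p‖ / ∏ i, x.1 i

section

variable {σ : Type*} [Fintype σ] {p : MvPolynomial σ ℂ}

lemma capacity_nonneg : 0 ≤ capacity p :=
  Real.iInf_nonneg fun x => div_nonneg (norm_nonneg _) (Finset.prod_nonneg fun i _ => (x.2 i).le)

lemma capacity_mul_prod_le {x : σ → ℝ} (hx : ∀ i, 0 < x i) :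
    capacity p * ∏ i, x i ≤ ‖eval (fun i => (x i : ℂ)) p‖ := by
  rw [← le_div_iff₀ (Finset.prod_pos fun i _ => hx i)]
  refine ciInf_le (f := fun x : {x : σ → ℝ // ∀ i, 0 < x i} =>
    ‖eval (fun i => (x.1 i : ℂ)) p‖ / ∏ i, x.1 i) ⟨0, ?_⟩ ⟨x, hx⟩
  rintro _ ⟨y, rfl⟩
  exact div_nonneg (norm_nonneg _) (Finset.prod_nonneg fun i _ => (y.2 i).le)

lemma le_capacity {c : ℝ}
    (h : ∀ x : σ → ℝ, (∀ i, 0 < x i) → c * ∏ i, x i ≤ ‖eval (fun i => (x i : ℂ)) p‖) :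
    c ≤ capacity p := by
  have : Nonempty {x : σ → ℝ // ∀ i, 0 < x i} := ⟨fun _ => 1, fun _ => one_pos⟩
  refine le_ciInf fun x => ?_
  rw [le_div_iff₀ (Finset.prod_pos fun i _ => x.2 i)]
  exact h x.1 x.2

lemma IsHStable.capacity_mul_prod_re_le (hs : IsHStable p) {m : ℕ} (hp : p.IsHomogeneous m)
    {z : σ → ℂ} (hz : ∀ i, 0 < (z i).re) : capacity p * ∏ i, (z i).re ≤ ‖eval z p‖ :=
  (capacity_mul_prod_le hz).trans (hs.norm_eval_re_le hp fun i => (hz i).le)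

end

/-- The univariate polynomial obtained from `p` by substituting `s` for all variables but the
first one. -/
noncomputable def slice {R : Type*} [CommSemiring R] {n : ℕ} (p : MvPolynomial (Fin (n + 1)) R)
    (s : Fin n → R) : Polynomial R :=
  (finSuccEquiv R n p).map (eval s)

section

variable {R : Type*} [CommSemiring R] {n : ℕ} (p : MvPolynomial (Fin (n + 1)) R) (s : Fin n → R)

lemma eval_slice (y : R) : (slice p s).eval y = eval (Fin.cons y s) p :=
  (eval_eq_eval_mv_eval' s y p).symm

lemma natDegree_slice_le : (slice p s).natDegree ≤ p.degreeOf 0 :=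
  (Polynomial.natDegree_map_le).trans (natDegree_finSuccEquiv p).le

lemma finSuccEquiv_pderiv_zero :
    finSuccEquiv R n (pderiv 0 p) = Polynomial.derivative (finSuccEquiv R n p) := by
  induction p using MvPolynomial.induction_on with
  | C a => simp [finSuccEquiv_apply]
  | add p q hp hq => simp only [map_add, hp, hq]
  | mul_X p i hp =>
    have hX : finSuccEquiv R n (pderiv 0 (X i)) =
        Polynomial.derivative (finSuccEquiv R n (X i)) := by
      cases i using Fin.cases with
      | zero => rw [pderiv_X_self, map_one, finSuccEquiv_X_zero, Polynomial.derivative_X]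
      | succ j =>
        rw [pderiv_X_of_ne (Fin.succ_ne_zero j), map_zero, finSuccEquiv_X_succ,
          Polynomial.derivative_C]
    rw [pderiv_mul, map_add, map_mul, map_mul, map_mul, Polynomial.derivative_mul, hp, hX]

lemma derivative_slice : Polynomial.derivative (slice p s) = slice (pderiv 0 p) s := by
  rw [slice, slice, Polynomial.derivative_map, finSuccEquiv_pderiv_zero]

lemma eval_coeff_one_finSuccEquiv :
    eval s ((finSuccEquiv R n p).coeff 1) = eval (Fin.cons 0 s) (pderiv 0 p) := by
  rw [← eval_slice, ← derivative_slice, ← Polynomial.coeff_zero_eq_eval_zero,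
    Polynomial.coeff_derivative, slice, Polynomial.coeff_map]
  simp

end

section

variable {n m : ℕ} {p : MvPolynomial (Fin (n + 1)) ℂ}

lemma exists_re_pos_mul_self_eq {u : ℂ} (hu : u ∈ Complex.slitPlane) :
    ∃ s : ℂ, 0 < s.re ∧ s * s = u := by
  refine ⟨Complex.exp (Complex.log u / 2), ?_, ?_⟩
  · have arg_lt := (Complex.arg_le_pi u).lt_of_ne (Complex.slitPlane_arg_ne_pi hu)
    have lt_arg := Complex.neg_pi_lt_arg u
    have im_eq : (Complex.log u / 2).im = u.arg / 2 := by
      rw [Complex.div_ofNat_im, Complex.log_im]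
    rw [Complex.exp_re, im_eq]
    exact mul_pos (Real.exp_pos _) (Real.cos_pos_of_mem_Ioo ⟨by linarith, by linarith⟩)
  · rw [← Complex.exp_add, add_halves, Complex.exp_log (Complex.slitPlane_ne_zero hu)]

lemma IsHStable.nonpos_of_eval_slice_eq_zero (hs : IsHStable p) (hp : p.IsHomogeneous m)
    {x : Fin n → ℝ} (hx : ∀ i, 0 < x i) (u : ℂ)
    (hu : (slice p fun i => (x i : ℂ)).eval u = 0) : u ≤ 0 := by
  by_contra hu_nonpos
  have hslit : u ∈ Complex.slitPlane := Complex.mem_slitPlane_iff_not_le_zero.2 hu_nonpos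
  obtain ⟨s, hs_re, rfl⟩ := exists_re_pos_mul_self_eq hslit
  have hs0 : s ≠ 0 := fun h => by simp [h] at hs_re
  have inv_re : 0 < s⁻¹.re := by
    have := Complex.normSq_pos.2 hs0
    rw [Complex.inv_re]
    positivity
  refine hs (fun i => s⁻¹ * (Fin.cons (s * s) (fun i => (x i : ℂ)) : Fin (n + 1) → ℂ) i) ?_ ?_
  · refine Fin.cases ?_ fun i => ?_
    · simpa [hs0] using hs_re
    · rw [Fin.cons_succ, Complex.re_mul_ofReal]
      exact mul_pos inv_re (hx i)
  · rw [eval_mul_of_isHomogeneous hp, ← eval_slice, hu, mul_zero]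

lemma IsHStable.pderiv_zero (hs : IsHStable p) (hp : p.IsHomogeneous m) (hcap : 0 < capacity p) :
    IsHStable (pderiv 0 p) := by
  intro z hz
  set f := slice p (Fin.tail z)
  have eval_f (t : ℂ) : f.eval t = eval (Fin.cons t (Fin.tail z)) p := eval_slice p _ t
  have cons_re {t : ℂ} (ht : 0 < t.re) :
      ∀ i, 0 < ((Fin.cons t (Fin.tail z) : Fin (n + 1) → ℂ) i).re :=
    Fin.cases ht fun i => hz i.succ
  have roots_re (u : ℂ) (hu : f.eval u = 0) : u.re ≤ 0 := by
    by_contra! hpos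
    exact hs _ (cons_re hpos) (by rw [← eval_f, hu])
  have degree_pos : 0 < f.degree := by
    by_contra! hdeg
    rw [Polynomial.eq_C_of_degree_le_zero hdeg] at eval_f
    have : capacity p * ∏ i, (Fin.tail z i).re ≤ 0 :=
      le_of_forall_pos_mul_le_add_mul (a := ‖f.coeff 0‖) fun t ht => by
        have := hs.capacity_mul_prod_re_le hp (cons_re (t := t) (by simpa using ht))
        rw [Fin.prod_univ_succ, ← eval_f] at this
        simpa [mul_comm, mul_left_comm, mul_assoc] using this
    exact this.not_gt (mul_pos hcap (Finset.prod_pos fun i _ => hz i.succ))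
  have := eval_derivative_ne_zero_of_re_pos roots_re degree_pos (hz 0)
  rwa [derivative_slice, eval_slice, Fin.cons_self_tail] at this

lemma IsHStable.capacity_mul_gurvitsFactor_le (hs : IsHStable p) (hp : p.IsHomogeneous m) {k : ℕ}
    (hk : p.degreeOf 0 ≤ k) :
    capacity p * gurvitsFactor k ≤ capacity ((finSuccEquiv ℂ n p).coeff 1) := by
  refine le_capacity fun x hx => ?_
  set f := slice p fun i => (x i : ℂ)
  have growth (t : ℝ) (ht : 0 < t) : capacity p * (∏ i, x i) * t ≤ ‖f.eval (t : ℂ)‖ := by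
    have hcons : (fun i => ((Fin.cons t x : Fin (n + 1) → ℝ) i : ℂ)) =
        Fin.cons (t : ℂ) fun i => (x i : ℂ) := by
      funext i
      cases i using Fin.cases <;> simp
    have := capacity_mul_prod_le (p := p) (x := Fin.cons t x) (Fin.cases ht hx)
    rw [Fin.prod_univ_succ, hcons, ← eval_slice] at this
    simpa [mul_comm, mul_left_comm, mul_assoc] using this
  have bound : ∀ e ∈ Set.Ioi (0 : ℝ), capacity p * (∏ i, x i) * gurvitsFactor k ≤
      ‖f.derivative.eval (e : ℂ)‖ := fun e he =>
    mul_gurvitsFactor_le_norm_eval_derivative (hs.nonpos_of_eval_slice_eq_zero hp hx)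
      ((natDegree_slice_le p _).trans hk)
      (mul_nonneg capacity_nonneg (Finset.prod_nonneg fun i _ => (hx i).le)) growth he
  have := le_on_closure bound continuousOn_const (by fun_prop)
    (by simp : (0 : ℝ) ∈ closure (Set.Ioi 0))
  rw [eval_coeff_one_finSuccEquiv, ← eval_slice, ← derivative_slice, mul_right_comm]
  exact_mod_cast this

lemma IsHStable.coeff_one_finSuccEquiv (hs : IsHStable p) (hp : p.IsHomogeneous m)
    (hcap : 0 < capacity p) : IsHStable ((finSuccEquiv ℂ n p).coeff 1) := by
  intro s hs_re
  have hd := hs.pderiv_zero hp hcap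
  have cap_pos : 0 < capacity ((finSuccEquiv ℂ n p).coeff 1) :=
    (mul_pos hcap (gurvitsFactor_pos _)).trans_le (hs.capacity_mul_gurvitsFactor_le hp le_rfl)
  have re_le : ‖eval (fun i => ((s i).re : ℂ)) ((finSuccEquiv ℂ n p).coeff 1)‖ ≤
      ‖eval s ((finSuccEquiv ℂ n p).coeff 1)‖ := by
    rw [eval_coeff_one_finSuccEquiv, eval_coeff_one_finSuccEquiv]
    convert hd.norm_eval_re_le hp.pderiv (z := Fin.cons 0 s)
      (Fin.cases le_rfl fun i => (hs_re i).le) using 4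
    funext i
    cases i using Fin.cases <;> simp
  have := (mul_pos cap_pos (Finset.prod_pos fun i _ => hs_re i)).trans_le
    ((capacity_mul_prod_le hs_re).trans re_le)
  exact norm_pos_iff.1 this

end

theorem IsHStable.capacity_mul_prod_gurvitsFactor_le {n : ℕ} {p : MvPolynomial (Fin n) ℂ}
    (hs : IsHStable p) (hp : p.IsHomogeneous n) {k : Fin n → ℕ} (hk : ∀ i, p.degreeOf i ≤ k i) :
    capacity p * ∏ i, gurvitsFactor (k i) ≤
      ‖p.coeff (Finsupp.equivFunOnFinite.symm fun _ => 1)‖ := by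
  induction n with
  | zero =>
    have := capacity_mul_prod_le (p := p) (x := isEmptyElim) isEmptyElim
    rw [eq_C_of_isEmpty p] at this ⊢
    simpa [Subsingleton.elim _ (0 : Fin 0 →₀ ℕ)] using this
  | succ n ih =>
    rcases (capacity_nonneg (p := p)).eq_or_lt with h0 | hcap
    · rw [← h0, zero_mul]
      exact norm_nonneg _
    have ones_eq_cons : (Finsupp.equivFunOnFinite.symm fun _ => 1 : Fin (n + 1) →₀ ℕ) =
        Finsupp.cons 1 (Finsupp.equivFunOnFinite.symm fun _ => 1) := by
      ext i
      refine Fin.cases ?_ (fun j => ?_) i <;> simp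
    rw [Fin.prod_univ_succ, ← mul_assoc, ones_eq_cons, ← finSuccEquiv_coeff_coeff]
    calc _ ≤ capacity ((finSuccEquiv ℂ n p).coeff 1) * ∏ i : Fin n, gurvitsFactor (k i.succ) := by
          gcongr
          · exact Finset.prod_nonneg fun i _ => (gurvitsFactor_pos _).le
          · exact hs.capacity_mul_gurvitsFactor_le hp (hk 0)
      _ ≤ _ := ih (hs.coeff_one_finSuccEquiv hp hcap)
          (hp.finSuccEquiv_coeff_isHomogeneous 1 n (by ring))
          fun i => (degreeOf_coeff_finSuccEquiv p i 1).trans (hk i.succ)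

end Capacity

section RegularFamily

open Finset Function
open scoped Nat

/-- `N` is the family of neighbourhoods of one colour class in a `k`-regular bipartite graph with
colour classes `ι` and `α`. -/
structure IsRegularFamily {ι α : Type*} [Fintype ι] [DecidableEq α] (N : ι → Finset α) (k : ℕ) :
    Prop where
  card_apply : ∀ i, #(N i) = k
  card_filter_mem : ∀ v, #{i | v ∈ N i} = k

namespace IsRegularFamily

lemma prod_prod_eq_prod_pow {ι α M : Type*} [Fintype ι] [Fintype α] [DecidableEq α]
    [CommMonoid M] {N : ι → Finset α} {k : ℕ} (hN : IsRegularFamily N k) (f : α → M) :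
    ∏ i, ∏ j ∈ N i, f j = ∏ j, f j ^ k := by
  rw [prod_comm' (t' := univ) (s' := fun j => {i | j ∈ N i}) (by simp)]
  simp only [prod_const, hN.card_filter_mem]

lemma pow_card_mul_prod_le_prod_sum {ι α : Type*} [Fintype ι] [Fintype α] [DecidableEq α]
    {N : ι → Finset α} {k : ℕ} (hN : IsRegularFamily N k) (hk : k ≠ 0) {x : α → ℝ}
    (hx : ∀ j, 0 ≤ x j) :
    (k : ℝ) ^ Fintype.card ι * ∏ j, x j ≤ ∏ i, ∑ j ∈ N i, x j := by
  have amgm (i : ι) : (k : ℝ) * ∏ j ∈ N i, x j ^ (k : ℝ)⁻¹ ≤ ∑ j ∈ N i, x j := by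
    have := Real.geom_mean_le_arith_mean_weighted (N i) (fun _ => (k : ℝ)⁻¹) x
      (fun _ _ => by positivity) (by simp [hN.card_apply, hk]) fun j _ => hx j
    rwa [← mul_sum, ← div_eq_inv_mul, le_div_iff₀' (by positivity)] at this
  calc (k : ℝ) ^ Fintype.card ι * ∏ j, x j = ∏ i, (k : ℝ) * ∏ j ∈ N i, x j ^ (k : ℝ)⁻¹ := by
        rw [prod_mul_distrib, prod_const, card_univ, hN.prod_prod_eq_prod_pow]
        simp only [Real.rpow_inv_natCast_pow (hx _) hk]
    _ ≤ ∏ i, ∑ j ∈ N i, x j := prod_le_prod (fun i _ => mul_nonneg (by positivity)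
        (prod_nonneg fun j _ => Real.rpow_nonneg (hx j) _)) fun i _ => amgm i

end IsRegularFamily

/-- The product over `i` of the linear forms `∑ j ∈ N i, X j`; its coefficients count the systems of
representatives of `N` with prescribed multiplicities. -/
noncomputable def rowProduct {ι σ : Type*} [Fintype ι] (N : ι → Finset σ) : MvPolynomial σ ℂ :=
  ∏ i, ∑ j ∈ N i, .X j

section

open MvPolynomial

variable {ι σ : Type*} [Fintype ι] {N : ι → Finset σ}

lemma eval_rowProduct (z : σ → ℂ) : eval z (rowProduct N) = ∏ i, ∑ j ∈ N i, z j := by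
  simp [rowProduct, map_prod, map_sum]

lemma isHomogeneous_rowProduct : (rowProduct N).IsHomogeneous (Fintype.card ι) := by
  have : (rowProduct N).IsHomogeneous (∑ _i : ι, 1) :=
    IsHomogeneous.prod _ _ _ fun i _ => IsHomogeneous.sum _ _ _ fun j _ => isHomogeneous_X _ j
  simpa using this

lemma isHStable_rowProduct (hN : ∀ i, (N i).Nonempty) : IsHStable (rowProduct N) := by
  intro z hz
  rw [eval_rowProduct, prod_ne_zero_iff]
  intro i _ h
  have : 0 < (∑ j ∈ N i, z j).re := by
    rw [Complex.re_sum]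
    exact sum_pos (fun j _ => hz j) (hN i)
  simp [h] at this

lemma degreeOf_rowProduct_le [DecidableEq σ] (j : σ) :
    (rowProduct N).degreeOf j ≤ #{i | j ∈ N i} := by
  refine (degreeOf_prod_le j _ _).trans ?_
  rw [card_filter]
  refine sum_le_sum fun i _ => (degreeOf_sum_le j _ _).trans (Finset.sup_le fun l hl => ?_)
  rcases eq_or_ne j l with rfl | hjl
  · simp [hl]
  · simp [degreeOf_X, hjl]

lemma pow_le_capacity_rowProduct [Fintype σ] [DecidableEq σ] {k : ℕ} (hN : IsRegularFamily N k)
    (hk : k ≠ 0) : (k : ℝ) ^ Fintype.card ι ≤ capacity (rowProduct N) := by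
  refine le_capacity fun x hx => ?_
  have : eval (fun j => (x j : ℂ)) (rowProduct N) = (∏ i, ∑ j ∈ N i, x j : ℝ) := by
    rw [eval_rowProduct]
    push_cast
    rfl
  rw [this, Complex.norm_real]
  exact (hN.pow_card_mul_prod_le_prod_sum hk fun j => (hx j).le).trans (le_abs_self _)

lemma sum_single_eq_one_iff_bijective {ι : Type*} [Fintype ι] {f : ι → ι} :
    ∑ i, Finsupp.single (f i) 1 = (Finsupp.equivFunOnFinite.symm fun _ => 1 : ι →₀ ℕ) ↔
      Bijective f := by
  classical
  refine ⟨fun h => Finite.surjective_iff_bijective.1 fun j => ?_, fun h => ?_⟩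
  · by_contra! hj
    simpa [Finsupp.finsetSum_apply, Finsupp.single_apply, hj] using DFunLike.congr_fun h j
  · ext j
    obtain ⟨i, rfl⟩ := h.surjective j
    simp [Finsupp.finsetSum_apply, Finsupp.single_apply, h.injective.eq_iff]

/-- The perfect matchings of the bipartite graph in which `i` has the neighbourhood `N i`. -/
def perfectMatchings {ι : Type*} [Fintype ι] [DecidableEq ι] (N : ι → Finset ι) :
    Finset (Equiv.Perm ι) :=
  {π | ∀ i, π i ∈ N i}

lemma mem_perfectMatchings {ι : Type*} [Fintype ι] [DecidableEq ι] {N : ι → Finset ι}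
    {π : Equiv.Perm ι} : π ∈ perfectMatchings N ↔ ∀ i, π i ∈ N i := by
  simp [perfectMatchings]

lemma coeff_rowProduct [DecidableEq ι] (N : ι → Finset ι) :
    (rowProduct N).coeff (Finsupp.equivFunOnFinite.symm fun _ => 1) = #(perfectMatchings N) := by
  classical
  have card_bijective : #{f ∈ Fintype.piFinset N | Bijective f} = #(perfectMatchings N) := by
    symm
    refine card_nbij (fun π => π) ?_ DFunLike.coe_injective.injOn ?_
    · simp +contextual [Set.MapsTo, mem_perfectMatchings]
    · intro f hf
      simp only [coe_filter, Fintype.mem_piFinset, Set.mem_ofPred_eq] at hf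
      exact ⟨Equiv.ofBijective f hf.2, by simpa [mem_perfectMatchings] using hf.1, rfl⟩
  rw [← card_bijective, rowProduct, prod_univ_sum, coeff_sum, card_filter, Nat.cast_sum]
  refine sum_congr rfl fun f _ => ?_
  have : ∏ i, (X (f i) : MvPolynomial ι ℂ) = monomial (∑ i, Finsupp.single (f i) 1) 1 := by
    rw [monomial_sum_one]
    rfl
  simp only [this, coeff_monomial, sum_single_eq_one_iff_bijective]
  simp

end

lemma IsRegularFamily.pow_le_card_perfectMatchings {n k : ℕ} {N : Fin n → Finset (Fin n)}
    (hN : IsRegularFamily N k) (hk : k ≠ 0) :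
    (k * gurvitsFactor k) ^ n ≤ #(perfectMatchings N) := by
  have nonempty (i : Fin n) : (N i).Nonempty := by
    rw [← card_pos, hN.card_apply]
    exact Nat.pos_of_ne_zero hk
  have gurvits := (isHStable_rowProduct nonempty).capacity_mul_prod_gurvitsFactor_le
    (by simpa using isHomogeneous_rowProduct (N := N)) (k := fun _ => k) fun j =>
      (degreeOf_rowProduct_le j).trans (hN.card_filter_mem j).le
  have capacity_ge := pow_le_capacity_rowProduct hN hk
  rw [coeff_rowProduct, Complex.norm_natCast, prod_const, card_univ, Fintype.card_fin] at gurvits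
  rw [Fintype.card_fin] at capacity_ge
  calc (k * gurvitsFactor k) ^ n = (k : ℝ) ^ n * gurvitsFactor k ^ n := mul_pow _ _ _
    _ ≤ capacity (rowProduct N) * gurvitsFactor k ^ n := by
        have := gurvitsFactor_pos k
        gcongr
    _ ≤ _ := gurvits

/-- The decompositions of the bipartite graph with neighbourhoods `N i` into an ordered `k`-tuple of
perfect matchings, each matching being given as a permutation. -/
def factorizations {ι : Type*} [Fintype ι] [DecidableEq ι] (k : ℕ) (N : ι → Finset ι) :
    Finset (Fin k → Equiv.Perm ι) :=
  {σ | ∀ i, Injective (fun l => σ l i) ∧ univ.image (fun l => σ l i) = N i}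

section

variable {ι : Type*} [Fintype ι] [DecidableEq ι] {N : ι → Finset ι} {k : ℕ}

lemma mem_factorizations {σ : Fin k → Equiv.Perm ι} : σ ∈ factorizations k N ↔
    ∀ i, Injective (fun l => σ l i) ∧ univ.image (fun l => σ l i) = N i := by
  simp [factorizations]

lemma IsRegularFamily.erase (hN : IsRegularFamily N (k + 1)) {π : Equiv.Perm ι}
    (hπ : π ∈ perfectMatchings N) : IsRegularFamily (fun i => (N i).erase (π i)) k where
  card_apply i := by
    rw [card_erase_of_mem (mem_perfectMatchings.1 hπ i), hN.card_apply, Nat.add_sub_cancel]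
  card_filter_mem v := by
    have filter_erase : ({i | v ∈ (N i).erase (π i)} : Finset ι) =
        ({i | v ∈ N i} : Finset ι).erase (π.symm v) := by
      ext i
      simp [Equiv.eq_symm_apply, eq_comm]
    have mem : π.symm v ∈ ({i | v ∈ N i} : Finset ι) := by
      simpa using mem_perfectMatchings.1 hπ (π.symm v)
    rw [filter_erase, card_erase_of_mem mem, hN.card_filter_mem, Nat.add_sub_cancel]

lemma cons_mem_factorizations {π : Equiv.Perm ι} {σ : Fin k → Equiv.Perm ι}
    (hπ : π ∈ perfectMatchings N) (hσ : σ ∈ factorizations k fun i => (N i).erase (π i)) :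
    Fin.cons π σ ∈ factorizations (k + 1) N := by
  rw [mem_perfectMatchings] at hπ
  rw [mem_factorizations] at hσ ⊢
  intro i
  obtain ⟨inj, image_eq⟩ := hσ i
  have cons_apply : (fun l => (Fin.cons π σ : Fin (k + 1) → Equiv.Perm ι) l i) =
      Fin.cons (π i) fun l => σ l i := by
    funext l
    cases l using Fin.cases <;> simp
  rw [cons_apply, Fin.cons_injective_iff]
  refine ⟨⟨fun ⟨l, hl⟩ => ?_, inj⟩, ?_⟩
  · have : π i ∈ (N i).erase (π i) := image_eq ▸ mem_image.2 ⟨l, mem_univ _, hl⟩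
    simp at this
  · rw [← insert_erase (hπ i), ← image_eq, ← coe_inj]
    simp [Fin.range_cons]

lemma sum_card_factorizations_erase_le :
    ∑ π ∈ perfectMatchings N, #(factorizations k fun i => (N i).erase (π i)) ≤
      #(factorizations (k + 1) N) := by
  rw [← card_sigma]
  refine card_le_card_of_injOn (fun x => (Fin.cons x.1 x.2 : Fin (k + 1) → Equiv.Perm ι)) ?_ ?_
  · rintro ⟨π, σ⟩ hx
    obtain ⟨hπ, hσ⟩ := mem_sigma.1 hx
    exact cons_mem_factorizations hπ hσ
  · rintro ⟨π, σ⟩ - ⟨π', σ'⟩ - h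
    obtain ⟨rfl, rfl⟩ := Fin.cons_inj.1 h
    rfl

end

lemma factorial_sq_div_pow_succ (k : ℕ) :
    ((k + 1)! : ℝ) ^ 2 / ((k + 1 : ℕ) : ℝ) ^ (k + 1) =
      (k + 1 : ℕ) * gurvitsFactor (k + 1) * ((k ! : ℝ) ^ 2 / (k : ℝ) ^ k) := by
  rw [gurvitsFactor_succ, Nat.factorial_succ, div_pow]
  have : (k : ℝ) ^ k ≠ 0 := by
    rcases eq_or_ne k 0 with rfl | hk
    · simp
    · positivity
  push_cast
  field_simp
  ring

lemma IsRegularFamily.pow_le_card_factorizations {n k : ℕ} {N : Fin n → Finset (Fin n)}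
    (hN : IsRegularFamily N k) :
    ((k ! : ℝ) ^ 2 / (k : ℝ) ^ k) ^ n ≤ #(factorizations k N) := by
  induction k generalizing N with
  | zero =>
    have : factorizations 0 N = univ := by
      ext σ
      simp only [mem_factorizations, injective_of_subsingleton, univ_eq_empty, image_empty,
        card_eq_zero.1 (hN.card_apply _), and_self, implies_true, mem_univ]
    simp [this]
  | succ k ih =>
    set Q : ℝ := ((k ! : ℝ) ^ 2 / (k : ℝ) ^ k) ^ n
    calc (((k + 1)! : ℝ) ^ 2 / ((k + 1 : ℕ) : ℝ) ^ (k + 1)) ^ n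
        = ((k + 1 : ℕ) * gurvitsFactor (k + 1)) ^ n * Q := by
          rw [factorial_sq_div_pow_succ, mul_pow]
      _ ≤ #(perfectMatchings N) * Q := by
          gcongr
          exact hN.pow_le_card_perfectMatchings k.succ_ne_zero
      _ = ∑ _π ∈ perfectMatchings N, Q := by rw [sum_const, nsmul_eq_mul]
      _ ≤ ∑ π ∈ perfectMatchings N,
            (#(factorizations k fun i => (N i).erase (π i)) : ℝ) :=
          sum_le_sum fun π hπ => ih (hN.erase hπ)
      _ ≤ #(factorizations (k + 1) N) := by exact_mod_cast sum_card_factorizations_erase_le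

end RegularFamily

section Shearer

open Finset MeasureTheory
open scoped ENNReal

lemma sum_prod_rpow_le_prod_sum_rpow {κ V : Type*} (s : Finset κ) (B : Finset V) {p : V → ℝ}
    (hp : ∀ v ∈ B, 0 ≤ p v) (hsum : ∑ v ∈ B, p v = 1) (x : V → κ → ℝ≥0∞) :
    ∑ a ∈ s, ∏ v ∈ B, x v a ^ p v ≤ ∏ v ∈ B, (∑ a ∈ s, x v a) ^ p v := by
  let _ : MeasurableSpace κ := ⊤
  simpa only [lintegral_finset, Measure.count_singleton, mul_one] using
    ENNReal.lintegral_prod_norm_pow_le (μ := Measure.count.restrict s) B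
      (fun v _ => (measurable_from_top (f := x v)).aemeasurable) hsum hp

lemma pow_sum_le_mul_prod_sum {κ V : Type*} {s : Finset κ} {B : Finset V} (hB : B.Nonempty)
    {K : ℝ≥0∞} {y : κ → ℝ≥0∞} {x : V → κ → ℝ≥0∞}
    (h : ∀ a ∈ s, y a ^ #B ≤ K * ∏ v ∈ B, x v a) :
    (∑ a ∈ s, y a) ^ #B ≤ K * ∏ v ∈ B, ∑ a ∈ s, x v a := by
  have card_ne_zero : (#B : ℝ) ≠ 0 := by simpa using hB.ne_empty
  set q : ℝ := (#B : ℝ)⁻¹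
  have hq : 0 ≤ q := by positivity
  have pow_rpow (t : ℝ≥0∞) : (t ^ #B) ^ q = t := by
    rw [← ENNReal.rpow_natCast, ENNReal.rpow_rpow_inv card_ne_zero]
  have rpow_pow (t : ℝ≥0∞) : (t ^ q) ^ #B = t := by
    rw [← ENNReal.rpow_natCast, ENNReal.rpow_inv_rpow card_ne_zero]
  have sum_le : ∑ a ∈ s, y a ≤ K ^ q * ∏ v ∈ B, (∑ a ∈ s, x v a) ^ q := calc
    ∑ a ∈ s, y a ≤ ∑ a ∈ s, K ^ q * ∏ v ∈ B, x v a ^ q := by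
      refine sum_le_sum fun a ha => ?_
      rw [← pow_rpow (y a), ENNReal.prod_rpow_of_nonneg hq, ← ENNReal.mul_rpow_of_nonneg _ _ hq]
      exact ENNReal.rpow_le_rpow (h a ha) hq
    _ ≤ K ^ q * ∏ v ∈ B, (∑ a ∈ s, x v a) ^ q := by
      rw [← mul_sum]
      gcongr
      exact sum_prod_rpow_le_prod_sum_rpow s B (fun _ _ => hq)
        (by rw [sum_const, nsmul_eq_mul, mul_inv_cancel₀ card_ne_zero]) x
  calc (∑ a ∈ s, y a) ^ #B ≤ (K ^ q * ∏ v ∈ B, (∑ a ∈ s, x v a) ^ q) ^ #B := by gcongr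
    _ = K * ∏ v ∈ B, ∑ a ∈ s, x v a := by
      rw [mul_pow, ← prod_pow]
      simp only [rpow_pow]

variable {E V κ : Type*} [DecidableEq κ]

lemma card_image_restrict_eq_sum {S : Finset E} {i : E} (hi : i ∈ S) (F : Finset (E → κ)) :
    #(F.image S.restrict) = ∑ a ∈ F.image (· i), #({f ∈ F | f i = a}.image S.restrict) := by
  have mapsTo : Set.MapsTo (fun g : S → κ => g ⟨i, hi⟩) (F.image S.restrict) (F.image (· i)) := by
    intro g hg
    obtain ⟨f, hf, rfl⟩ := mem_image.1 (mem_coe.1 hg)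
    exact mem_coe.2 (mem_image_of_mem _ hf)
  rw [card_eq_sum_card_fiberwise mapsTo]
  exact sum_congr rfl fun a _ => by rw [filter_image]; rfl

variable [DecidableEq E] [Fintype V] {A : V → Finset E} {d : ℕ}

lemma pow_card_le_prod_card_image_restrict_of_agree (hd : d ≠ 0) {U : Finset E}
    (hU : ∀ i ∈ U, d ≤ #{v | i ∈ A v}) {F : Finset (E → κ)}
    (hF : ∀ f ∈ F, ∀ g ∈ F, ∀ i ∉ U, f i = g i) :
    #F ^ d ≤ ∏ v, #(F.image (A v).restrict) := by
  classical
  induction U using Finset.induction_on generalizing F with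
  | empty =>
    rcases F.eq_empty_or_nonempty with rfl | hne
    · simp [hd]
    · have card_le_one : #F ≤ 1 :=
        card_le_one.2 fun f hf g hg => funext fun i => hF f hf g hg i (notMem_empty i)
      calc #F ^ d ≤ 1 := Nat.pow_le_one_iff hd |>.2 card_le_one
        _ ≤ _ := Nat.one_le_iff_ne_zero.2 <| prod_ne_zero_iff.2 fun v _ =>
          (card_pos.2 (hne.image _)).ne'
  | insert i U _ ih =>
    obtain ⟨B, hB, rfl⟩ := exists_subset_card_eq (hU i (mem_insert_self i U))
    have fiber (a : κ) : #{f ∈ F | f i = a} ^ #B ≤ (∏ v ∈ univ \ B, #(F.image (A v).restrict)) *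
        ∏ v ∈ B, #({f ∈ F | f i = a}.image (A v).restrict) := by
      have agree : ∀ f ∈ ({f ∈ F | f i = a} : Finset (E → κ)),
          ∀ g ∈ ({f ∈ F | f i = a} : Finset (E → κ)), ∀ j ∉ U, f j = g j := by
        intro f hf g hg j hj
        rw [mem_filter] at hf hg
        rcases eq_or_ne j i with rfl | hji
        · rw [hf.2, hg.2]
        · exact hF f hf.1 g hg.1 j (by simp [hji, hj])
      refine (ih (fun j hj => hU j (mem_insert_of_mem hj)) agree).trans ?_
      rw [← prod_sdiff (subset_univ B)]
      gcongr
      exact filter_subset _ _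
    have holder := pow_sum_le_mul_prod_sum (s := F.image (· i)) (card_ne_zero.1 hd)
      (y := fun a => (#{f ∈ F | f i = a} : ℝ≥0∞))
      (x := fun v a => (#({f ∈ F | f i = a}.image (A v).restrict) : ℝ≥0∞))
      (K := ((∏ v ∈ univ \ B, #(F.image (A v).restrict) : ℕ) : ℝ≥0∞))
      fun a _ => by exact_mod_cast fiber a
    rw [card_eq_sum_card_image (· i) F, ← prod_sdiff (subset_univ B), prod_congr rfl fun v hv =>
        card_image_restrict_eq_sum (mem_filter.1 (hB hv)).2 F]
    exact_mod_cast holder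

lemma pow_card_le_prod_card_image_restrict (hd : d ≠ 0) (hA : ∀ i, d ≤ #{v | i ∈ A v})
    (F : Finset (E → κ)) : #F ^ d ≤ ∏ v, #(F.image (A v).restrict) := by
  refine pow_card_le_prod_card_image_restrict_of_agree hd (U := univ.biUnion A) (fun i _ => hA i) ?_
  intro _ _ _ _ i hi
  obtain ⟨v, hv⟩ := card_pos.1 ((Nat.pos_of_ne_zero hd).trans_le (hA i))
  exact absurd (mem_biUnion.2 ⟨v, mem_univ v, (mem_filter.1 hv).2⟩) hi

end Shearer

section Counting

open Finset Function
open scoped Nat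

section

variable {ι α κ : Type*} [Fintype ι] [DecidableEq ι] [Fintype κ]

open scoped Classical in
/-- The colourings of the edge sequence `e` in which every colour class is a 1-factor. -/
noncomputable def factorColorings (κ : Type*) [Fintype κ] (e : ι → Finset α) : Finset (ι → κ) :=
  {c | ∀ v k, ∃! i, v ∈ e i ∧ c i = k}

lemma mem_factorColorings {e : ι → Finset α} {c : ι → κ} :
    c ∈ factorColorings κ e ↔ ∀ v k, ∃! i, v ∈ e i ∧ c i = k := by
  simp [factorColorings]

variable [DecidableEq α] {e : ι → Finset α} {c : ι → κ}

lemma bijective_restrict_of_mem_factorColorings (hc : c ∈ factorColorings κ e) (v : α) :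
    Bijective (restrict {i | v ∈ e i} c) := by
  rw [mem_factorColorings] at hc
  refine ⟨fun i j hij => Subtype.ext ?_, fun k => ?_⟩
  · exact (hc v (c j)).unique ⟨(mem_filter.1 i.2).2, hij⟩ ⟨(mem_filter.1 j.2).2, rfl⟩
  · obtain ⟨i, ⟨hi, rfl⟩, -⟩ := hc v k
    exact ⟨⟨i, by simpa using hi⟩, rfl⟩

lemma card_filter_mem_of_mem_factorColorings (hc : c ∈ factorColorings κ e) (v : α) :
    #{i | v ∈ e i} = Fintype.card κ := by
  rw [← Fintype.card_coe]
  exact Fintype.card_of_bijective (bijective_restrict_of_mem_factorColorings hc v)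

lemma card_image_restrict_factorColorings_le [DecidableEq κ] (v : α) :
    #((factorColorings κ e).image (restrict {i | v ∈ e i})) ≤ (Fintype.card κ)! := by
  rcases (factorColorings κ e).eq_empty_or_nonempty with h | ⟨c₀, hc₀⟩
  · simp [h]
  let S : Finset ι := {i | v ∈ e i}
  have bijective {c} (hc : c ∈ factorColorings κ e) : Bijective (S.restrict c) :=
    bijective_restrict_of_mem_factorColorings hc v
  have surjOn : Set.SurjOn (fun g : S ≃ κ => (g : S → κ)) (univ : Finset (S ≃ κ))
      ((factorColorings κ e).image S.restrict : Finset (S → κ)) := by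
    intro g hg
    obtain ⟨c, hc, rfl⟩ := mem_image.1 (mem_coe.1 hg)
    exact ⟨Equiv.ofBijective _ (bijective hc), mem_coe.2 (mem_univ _), rfl⟩
  let g₀ : S ≃ κ := Equiv.ofBijective _ (bijective hc₀)
  calc #((factorColorings κ e).image S.restrict) ≤ Fintype.card (S ≃ κ) :=
        card_le_card_of_surjOn _ surjOn
    _ = (Fintype.card κ)! := by rw [Fintype.card_equiv g₀, Fintype.card_congr g₀]

end

lemma card_factorColorings_pow_le {ι α κ : Type*} [Fintype ι] [DecidableEq ι] [Fintype α]
    [Fintype κ] {e : ι → Finset α} {d : ℕ} (hd : d ≠ 0) (he : ∀ i, d ≤ #(e i)) :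
    #(factorColorings κ e) ^ d ≤ (Fintype.card κ)! ^ Fintype.card α := by
  classical
  calc #(factorColorings κ e) ^ d
      ≤ ∏ v, #((factorColorings κ e).image (restrict {i | v ∈ e i})) :=
        pow_card_le_prod_card_image_restrict hd (by simpa using he) _
    _ ≤ ∏ _v : α, (Fintype.card κ)! :=
        prod_le_prod' fun v _ => card_image_restrict_factorColorings_le v
    _ = (Fintype.card κ)! ^ Fintype.card α := by rw [prod_const, card_univ]

section

variable {n d : ℕ}

-- Translating `σ` by a permutation only reorders the factors, so dropping the normalization
-- `σ 0 = 1` multiplies the permanent by `n!`.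
lemma factorial_mul_mper (hd : 0 < d) (A : (Fin d → Fin n) → ℕ) :
    n ! * mper A = ∑ σ : Fin d → Equiv.Perm (Fin n), ∏ i, A fun k => σ k i := by
  classical
  have fiber (τ : Equiv.Perm (Fin n)) :
      ∑ σ : Fin d → Equiv.Perm (Fin n) with σ ⟨0, hd⟩ = τ, ∏ i, A (fun k => σ k i) = mper A := by
    refine sum_bij' (fun σ _ k => σ k * τ⁻¹) (fun σ _ k => σ k * τ) ?_ ?_ ?_ ?_ ?_
    · simp +contextual [← Equiv.Perm.one_def]
    · simp +contextual [hd, ← Equiv.Perm.one_def]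
    · simp
    · simp
    · intro σ _
      exact (Equiv.prod_comp τ⁻¹ fun i => A fun k => σ k i).symm
  rw [← sum_fiberwise univ fun σ : Fin d → Equiv.Perm (Fin n) => σ ⟨0, hd⟩]
  simp only [fiber, sum_const, card_univ, Fintype.card_perm, Fintype.card_fin, smul_eq_mul]

lemma factorial_mul_mper_adjMatrix (hd : 0 < d) (W : Finset (Finset (Fin n))) :
    n ! * mper (adjMatrix n d W) = #{σ : Fin d → Equiv.Perm (Fin n) | ∀ i ∈ univ,
      Injective (fun k => σ k i) ∧ univ.image (fun k => σ k i) ∈ W} := by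
  classical
  rw [factorial_mul_mper hd, card_filter]
  refine sum_congr rfl fun σ _ => ?_
  simp only [adjMatrix, prod_ite_zero, prod_const_one]

open scoped Classical in
/-- The sequences of `n` hyperedges of `W`, all of size `d`, covering each vertex `d` times. -/
noncomputable def regularSequences (d : ℕ) (W : Finset (Finset (Fin n))) :
    Finset (Fin n → Finset (Fin n)) :=
  {e | (∀ i, e i ∈ W) ∧ IsRegularFamily e d}

lemma mem_regularSequences {W : Finset (Finset (Fin n))} {e : Fin n → Finset (Fin n)} :
    e ∈ regularSequences d W ↔ (∀ i, e i ∈ W) ∧ IsRegularFamily e d := by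
  simp [regularSequences]

lemma sum_card_factorizations_le (hd : 0 < d) (W : Finset (Finset (Fin n))) :
    ∑ e ∈ regularSequences d W, #(factorizations d e) ≤ n ! * mper (adjMatrix n d W) := by
  rw [factorial_mul_mper_adjMatrix hd, ← card_sigma]
  refine card_le_card_of_injOn Sigma.snd ?_ ?_
  · rintro ⟨e, σ⟩ h
    obtain ⟨he, hσ⟩ := mem_sigma.1 h
    rw [mem_factorizations] at hσ
    simpa [fun i => (hσ i).1, fun i => (hσ i).2] using (mem_regularSequences.1 he).1
  · rintro ⟨e, σ⟩ h ⟨e', σ'⟩ h' rfl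
    have hσ := mem_factorizations.1 (mem_sigma.1 h).2
    have hσ' := mem_factorizations.1 (mem_sigma.1 h').2
    obtain rfl : e = e' := funext fun i => (hσ i).2.symm.trans (hσ' i).2
    rfl

end

lemma card_mul_factorial_le_card_enumerations {ι β : Type*} [Fintype ι] [DecidableEq ι]
    [Fintype β] [DecidableEq β] {S : Finset (Finset β)} (hS : ∀ T ∈ S, #T = Fintype.card ι) :
    #S * (Fintype.card ι)! ≤ #{f : ι → β | Injective f ∧ univ.image f ∈ S} := by
  classical
  have enumerations {T : Finset β} (hT : T ∈ S) : (Fintype.card ι)! ≤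
      #{f ∈ {f : ι → β | Injective f ∧ univ.image f ∈ S} | univ.image f = T} := by
    have card_eq : Fintype.card ι = Fintype.card T := by rw [Fintype.card_coe, hS T hT]
    rw [← Fintype.card_equiv (Fintype.equivOfCardEq card_eq), ← card_univ]
    refine card_le_card_of_injOn (fun g i => (g i : β)) (fun g _ => ?_) fun g _ g' _ h => ?_
    · have injective : Injective fun i => (g i : β) := Subtype.val_injective.comp g.injective
      have image_eq : univ.image (fun i => (g i : β)) = T := by
        ext b
        simp only [mem_image, mem_univ, true_and]
        exact ⟨by rintro ⟨i, rfl⟩; exact (g i).2, fun hb => ⟨g.symm ⟨b, hb⟩, by simp⟩⟩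
      simpa [image_eq, hT] using injective
    · exact Equiv.ext fun i => Subtype.ext (congrFun h i)
  rw [card_eq_sum_card_fiberwise (f := fun f : ι → β => univ.image f) (t := S)
    fun f hf => (mem_filter.1 hf).2.2, ← smul_eq_mul, ← sum_const]
  exact sum_le_sum fun T hT => enumerations hT

section

variable {n d : ℕ} {W : Finset (Finset (Fin n))}

lemma IsOneFactor.card_mul_eq (hW : ∀ e ∈ W, #e = d) {P : Finset (Finset (Fin n))}
    (hP : IsOneFactor W P) : #P * d = n := by
  have cover (v : Fin n) : #{e ∈ P | v ∈ e} = 1 := by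
    rw [card_eq_one]
    obtain ⟨e, he, unique⟩ := hP.2 v
    exact ⟨e, by ext e'; simpa using ⟨unique e', by rintro rfl; exact he⟩⟩
  have double_count := sum_card cover
  rw [sum_congr rfl fun e he => hW e (hP.1 he), sum_const, smul_eq_mul] at double_count
  simpa using double_count

open scoped Classical in
/-- The 1-factors of the hypergraph with hyperedge set `W`, as a `Finset`. -/
noncomputable def oneFactors (W : Finset (Finset (Fin n))) : Finset (Finset (Finset (Fin n))) :=
  {P | IsOneFactor W P}

lemma mem_oneFactors {P : Finset (Finset (Fin n))} : P ∈ oneFactors W ↔ IsOneFactor W P := by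
  simp [oneFactors]

lemma card_oneFactors : #(oneFactors W) = numOneFactors W := by
  rw [numOneFactors, ← Set.ncard_coe_finset]
  simp [oneFactors]

lemma factorColorings_of_enumeration {P : Fin d → Finset (Finset (Fin n))}
    (hP : ∀ k, IsOneFactor W (P k)) {f : Fin n → Σ _ : Fin d, Finset (Fin n)} (hf : Injective f)
    (himage : univ.image f = univ.sigma P) :
    (fun i => (f i).1) ∈ factorColorings (Fin d) fun i => (f i).2 := by
  have mem (i : Fin n) : (f i).2 ∈ P (f i).1 := by
    have : f i ∈ univ.sigma P := himage ▸ mem_image_of_mem f (mem_univ i)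
    simpa using this
  rw [mem_factorColorings]
  intro v k
  obtain ⟨e, ⟨he, hv⟩, unique⟩ := (hP k).2 v
  have mem_image_f : (⟨k, e⟩ : Σ _ : Fin d, Finset (Fin n)) ∈ univ.image f :=
    himage ▸ mem_sigma.2 ⟨mem_univ k, he⟩
  obtain ⟨i, -, hi⟩ := mem_image.1 mem_image_f
  refine ⟨i, by simp [hi, hv], ?_⟩
  rintro j ⟨hj, rfl⟩
  refine hf ?_
  rw [hi]
  exact Sigma.ext rfl (heq_of_eq (unique _ ⟨mem j, hj⟩))

lemma numOneFactors_pow_mul_factorial_le (hd : d ≠ 0) (hW : ∀ e ∈ W, #e = d) :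
    numOneFactors W ^ d * n ! ≤
      ∑ e ∈ regularSequences d W, #(factorColorings (Fin d) e) := by
  classical
  let tuples : Finset (Fin d → Finset (Finset (Fin n))) := Fintype.piFinset fun _ => oneFactors W
  have isOneFactor {P} (hP : P ∈ tuples) (k : Fin d) : IsOneFactor W (P k) :=
    mem_oneFactors.1 (Fintype.mem_piFinset.1 hP k)
  let S : Finset (Finset (Σ _ : Fin d, Finset (Fin n))) := tuples.image fun P => univ.sigma P
  have card_S : #S = numOneFactors W ^ d := by
    rw [card_image_of_injective, Fintype.card_piFinset_const, card_oneFactors]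
    intro P P' h
    ext k e
    simpa using congrArg (⟨k, e⟩ ∈ ·) h
  have card_of_mem_S : ∀ T ∈ S, #T = Fintype.card (Fin n) := by
    intro T hT
    obtain ⟨P, hP, rfl⟩ := mem_image.1 hT
    refine Nat.eq_of_mul_eq_mul_right (Nat.pos_of_ne_zero hd) ?_
    rw [card_sigma, sum_mul, sum_congr rfl fun k _ => (isOneFactor hP k).card_mul_eq hW]
    simp [mul_comm]
  have enumerations := card_mul_factorial_le_card_enumerations card_of_mem_S
  rw [card_S, Fintype.card_fin] at enumerations
  refine enumerations.trans ?_
  rw [← card_sigma]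
  refine card_le_card_of_injOn (fun f => ⟨fun i => (f i).2, fun i => (f i).1⟩) ?_ ?_
  · intro f hf
    obtain ⟨injective, P, hP, image_eq⟩ :
        Injective f ∧ ∃ P ∈ tuples, univ.sigma P = univ.image f := by
      simpa [S] using hf
    have coloring := factorColorings_of_enumeration (isOneFactor hP) injective image_eq.symm
    have mem_W (i : Fin n) : (f i).2 ∈ W := by
      have : f i ∈ univ.sigma P := image_eq ▸ mem_image_of_mem f (mem_univ i)
      exact (isOneFactor hP _).1 (mem_sigma.1 this).2
    refine mem_sigma.2 ⟨mem_regularSequences.2 ⟨mem_W, fun i => hW _ (mem_W i), fun v => ?_⟩,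
      coloring⟩
    simpa using card_filter_mem_of_mem_factorColorings coloring v
  · intro f _ f' _ h
    obtain ⟨h₂, h₁⟩ := Sigma.mk.inj h
    exact funext fun i => Sigma.ext (congrFun (eq_of_heq h₁) i) (heq_of_eq (congrFun h₂ i))

end

end Counting

section Main

open Finset
open scoped Nat

variable {n d : ℕ} {W : Finset (Finset (Fin n))}

lemma numOneFactors_pow_mul_factorial_le_card_regularSequences (hd : d ≠ 0)
    (hW : ∀ e ∈ W, #e = d) :
    (numOneFactors W : ℝ) ^ d * n ! ≤
      #(regularSequences d W) * ((d ! : ℝ) ^ ((1 : ℝ) / d)) ^ n := by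
  set L : ℝ := (d ! : ℝ) ^ ((1 : ℝ) / d)
  have L_pow : L ^ d = d ! := by
    simp only [L, one_div, Real.rpow_inv_natCast_pow (Nat.cast_nonneg (d !)) hd]
  have card_le : ∀ e ∈ regularSequences d W, (#(factorColorings (Fin d) e) : ℝ) ≤ L ^ n := by
    intro e he
    refine le_of_pow_le_pow_left₀ hd (by positivity) ?_
    rw [← pow_mul, mul_comm, pow_mul, L_pow]
    have := card_factorColorings_pow_le (κ := Fin d) hd
      fun i => ((mem_regularSequences.1 he).2.card_apply i).ge
    rw [Fintype.card_fin, Fintype.card_fin] at this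
    exact_mod_cast this
  calc (numOneFactors W : ℝ) ^ d * n !
      ≤ ∑ e ∈ regularSequences d W, (#(factorColorings (Fin d) e) : ℝ) := by
        exact_mod_cast numOneFactors_pow_mul_factorial_le hd hW
    _ ≤ #(regularSequences d W) * L ^ n := by
        rw [← nsmul_eq_mul]
        exact sum_le_card_nsmul _ _ _ card_le

lemma card_regularSequences_mul_le (hd : d ≠ 0) (W : Finset (Finset (Fin n))) :
    #(regularSequences d W) * ((d ! : ℝ) ^ 2 / (d : ℝ) ^ d) ^ n ≤
      n ! * mper (adjMatrix n d W) := by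
  calc #(regularSequences d W) * ((d ! : ℝ) ^ 2 / (d : ℝ) ^ d) ^ n
      ≤ ∑ e ∈ regularSequences d W, (#(factorizations d e) : ℝ) := by
        rw [← nsmul_eq_mul]
        exact card_nsmul_le_sum _ _ _ fun e he =>
          (mem_regularSequences.1 he).2.pow_le_card_factorizations
    _ ≤ n ! * mper (adjMatrix n d W) := by
        exact_mod_cast sum_card_factorizations_le (Nat.pos_of_ne_zero hd) W

end Main

theorem stmt8_general (n d : ℕ) (hd : d ≠ 0) (W : Finset (Finset (Fin n)))
    (huniform : ∀ e ∈ W, e.card = d) :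
    (numOneFactors W : ℝ) ≤
      ((mper (adjMatrix n d W) : ℝ) /
        (((d.factorial : ℝ) ^ 2 /
          ((d : ℝ) ^ d * (d.factorial : ℝ) ^ ((1 : ℝ) / d))) ^ n)) ^ ((1 : ℝ) / d) := by
  set φ : ℝ := (numOneFactors W : ℝ)
  set M : ℝ := (mper (adjMatrix n d W) : ℝ)
  set L : ℝ := (d.factorial : ℝ) ^ ((1 : ℝ) / d)
  set Q : ℝ := (d.factorial : ℝ) ^ 2 / (d : ℝ) ^ d
  set R : ℝ := ((regularSequences d W).card : ℝ)
  have upper : φ ^ d * n.factorial ≤ R * L ^ n :=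
    numOneFactors_pow_mul_factorial_le_card_regularSequences hd huniform
  have lower : R * Q ^ n ≤ n.factorial * M := card_regularSequences_mul_le hd W
  have : 0 < L := by positivity
  have : 0 < Q := by positivity
  have pow_mul_le : φ ^ d * Q ^ n ≤ M * L ^ n := by
    refine le_of_mul_le_mul_right ?_ (by positivity : (0 : ℝ) < n.factorial)
    calc φ ^ d * Q ^ n * n.factorial = φ ^ d * n.factorial * Q ^ n := by ring
      _ ≤ R * L ^ n * Q ^ n := by gcongr
      _ = R * Q ^ n * L ^ n := by ring
      _ ≤ n.factorial * M * L ^ n := by gcongr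
      _ = M * L ^ n * n.factorial := by ring
  have pow_le : φ ^ d ≤ M / (Q / L) ^ n := by
    rwa [le_div_iff₀ (by positivity), div_pow, ← mul_div_assoc, div_le_iff₀ (by positivity)]
  rw [← div_div, one_div, Real.le_rpow_inv_iff_of_pos (by positivity) (by positivity)
    (by positivity), Real.rpow_natCast]
  exact pow_le

/-- For a simple `d`-uniform hypergraph `G` on `n` vertices with `d ≥ 4` and `d ∣ n`,
the number of 1-factors satisfies `φ(G) ≤ (per M(G) / μ(n,d))^(1/d)`, where
`μ(n,d) = (d!² / (d^d · d!^(1/d)))^n`. -/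
theorem stmt8 (n d : ℕ) (hd : 4 ≤ d) (hdn : d ∣ n) (W : Finset (Finset (Fin n)))
    (huniform : ∀ e ∈ W, e.card = d) :
    (numOneFactors W : ℝ) ≤
      ((mper (adjMatrix n d W) : ℝ) /
        (((d.factorial : ℝ) ^ 2 /
          ((d : ℝ) ^ d * (d.factorial : ℝ) ^ ((1 : ℝ) / d))) ^ n)) ^ ((1 : ℝ) / d) :=
  stmt8_general n d (by lia) W huniform
end
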